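/- Let L be a logic such that L(α) ⊆ {D,T,4} for every α ∈ Ag. Then there exists a computable function κ : ℕ → ℕ such that every L-satisfiable closed formula φ is satisfied at a state of a model for L with at most κ(|φ|) states, where |φ| is the number of subformulas of φ. In particular, every such logic L has the finite model property. -/

import Mathlib

/-!
Truth of a closed formula at a point is turned into a *certificate*: a set of positions
(point, subformula occurrence) with chosen moves, such that no infinite path of moves unfolds a
`μ`-variable infinitely often without leaving its scope. A box for a transitive agent is also
passed on to the successors of a point, and the body of a box for a reflexive agent is required
at the point itself. Hence a certificate over a relation `R` proves truth in the model obtained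
from `R` by adding loops and taking transitive closures (`sem_of_cert`), and it suffices to find a
certificate over a finite relation; `win_of_sem` gives one over the original model.

The condition on paths is equivalent to the existence of ordinal ranks, one for each scope of a
`μ`-formula, which do not increase along moves and decrease whenever the `μ`-variable is unfolded
(`FinMarks.exists_rank`). So every point `s` carries finitely many ordinals `r s i`. The finite
model is obtained by redirecting each edge to a representative of its target (`compress`). This is
only sound if infinitely many decreases remain impossible although each redirection may change
the ordinals. To this end, points carry a ranking of their ordinals by age: an edge replaces
each ordinal by the largest one below it at the target, old values survive longest, and new values
are the youngest. There are finitely many combinations of label, order pattern and ages;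
the representative of each combination is a point for which the vector of ordinals, listed from
the oldest to the youngest, is lexicographically least. Redirection then never raises this vector, so
along an infinite path the values that survive from some time on are eventually constant, and a
trace with infinitely many decreases would get stuck strictly between them: the age of the oldest
value above it within that gap would decrease infinitely often (`no_bad_trace`).

The number of combinations is bounded by a fixed tower of exponentials in the number of
subformulas, which is the primitive recursive bound `sizeBound`.
-/

set_option linter.unusedVariables false

/-- Formulas of the multi-modal μ-calculus in negation normal form. -/
inductive Formula (Ag PVar LVar : Type) : Type
  | prop  : PVar → Formula Ag PVar LVar
  | nprop : PVar → Formula Ag PVar LVar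
  | tt    : Formula Ag PVar LVar
  | ff    : Formula Ag PVar LVar
  | var   : LVar → Formula Ag PVar LVar
  | and   : Formula Ag PVar LVar → Formula Ag PVar LVar → Formula Ag PVar LVar
  | or    : Formula Ag PVar LVar → Formula Ag PVar LVar → Formula Ag PVar LVar
  | dia   : Ag → Formula Ag PVar LVar → Formula Ag PVar LVar
  | box   : Ag → Formula Ag PVar LVar → Formula Ag PVar LVar
  | mu    : LVar → Formula Ag PVar LVar → Formula Ag PVar LVar
  | nu    : LVar → Formula Ag PVar LVar → Formula Ag PVar LVar
  deriving DecidableEq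

/-- A Kripke model over agents `Ag`, propositional variables `PVar`, states `W`. -/
structure Kripke (Ag PVar W : Type) where
  R : Ag → W → W → Prop
  V : W → Set PVar

variable {Ag PVar LVar W : Type}

/-- The semantics `⟦φ⟧_ρ ⊆ W`. -/
def sem [DecidableEq LVar] (M : Kripke Ag PVar W) :
    (LVar → Set W) → Formula Ag PVar LVar → Set W
  | _, .prop p  => {s | p ∈ M.V s}
  | _, .nprop p => {s | p ∉ M.V s}
  | _, .tt      => Set.univ
  | _, .ff      => ∅
  | ρ, .var X   => ρ X
  | ρ, .and φ ψ => sem M ρ φ ∩ sem M ρ ψ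
  | ρ, .or φ ψ  => sem M ρ φ ∪ sem M ρ ψ
  | ρ, .box α φ => {s | ∀ t, M.R α s t → t ∈ sem M ρ φ}
  | ρ, .dia α φ => {s | ∃ t, M.R α s t ∧ t ∈ sem M ρ φ}
  | ρ, .mu X φ  => ⋂₀ {S | sem M (Function.update ρ X S) φ ⊆ S}
  | ρ, .nu X φ  => ⋃₀ {S | S ⊆ sem M (Function.update ρ X S) φ}

/-- Free logical variables of a formula. -/
def freeVars : Formula Ag PVar LVar → Set LVar
  | .prop _  => ∅
  | .nprop _ => ∅
  | .tt      => ∅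
  | .ff      => ∅
  | .var X   => {X}
  | .and φ ψ => freeVars φ ∪ freeVars ψ
  | .or φ ψ  => freeVars φ ∪ freeVars ψ
  | .dia _ φ => freeVars φ
  | .box _ φ => freeVars φ
  | .mu X φ  => freeVars φ \ {X}
  | .nu X φ  => freeVars φ \ {X}

/-- A formula is closed when it has no free variable occurrences. -/
def Closed (φ : Formula Ag PVar LVar) : Prop := freeVars φ = ∅

/-- All logical variables (free or bound) occurring in a formula. -/
def vars : Formula Ag PVar LVar → Set LVar
  | .prop _  => ∅
  | .nprop _ => ∅
  | .tt      => ∅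
  | .ff      => ∅
  | .var X   => {X}
  | .and φ ψ => vars φ ∪ vars ψ
  | .or φ ψ  => vars φ ∪ vars ψ
  | .dia _ φ => vars φ
  | .box _ φ => vars φ
  | .mu X φ  => insert X (vars φ)
  | .nu X φ  => insert X (vars φ)

/-- The frame conditions `D, T, B, 4, 5`. -/
inductive FrameCond : Type
  | D | T | B | four | five
  deriving DecidableEq

/-- Satisfaction of a frame condition by a binary relation. -/
def FrameCond.holds : FrameCond → (W → W → Prop) → Prop
  | .D, R    => ∀ s, ∃ t, R s t
  | .T, R    => ∀ s, R s s
  | .B, R    => ∀ s t, R s t → R t s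
  | .four, R => ∀ s t r, R s t → R t r → R s r
  | .five, R => ∀ s t r, R s t → R s r → R t r

/-- A model for the logic `L` (assigning frame conditions to each agent). -/
def modelFor (L : Ag → Set FrameCond) (M : Kripke Ag PVar W) : Prop :=
  ∀ α : Ag, ∀ c ∈ L α, c.holds (M.R α)

/-- `L`-satisfiability of a (closed) formula. -/
def Satisfiable [DecidableEq LVar] (L : Ag → Set FrameCond)
    (φ : Formula Ag PVar LVar) : Prop :=
  ∃ (W : Type) (M : Kripke Ag PVar W) (s : W),
    modelFor L M ∧ ∀ ρ : LVar → Set W, s ∈ sem M ρ φ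

/-- Finite conjunction. -/
def listAnd : List (Formula Ag PVar LVar) → Formula Ag PVar LVar
  | []     => .tt
  | φ :: l => .and φ (listAnd l)

/-- Finite disjunction. -/
def listOr : List (Formula Ag PVar LVar) → Formula Ag PVar LVar
  | []     => .ff
  | φ :: l => .or φ (listOr l)

/-- Negation-normal-form negation (de Morgan dual), with `¬X = X`. -/
def neg : Formula Ag PVar LVar → Formula Ag PVar LVar
  | .prop p  => .nprop p
  | .nprop p => .prop p
  | .tt      => .ff
  | .ff      => .tt
  | .var X   => .var X
  | .and φ ψ => .or (neg φ) (neg ψ)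
  | .or φ ψ  => .and (neg φ) (neg ψ)
  | .box α φ => .dia α (neg φ)
  | .dia α φ => .box α (neg φ)
  | .mu X φ  => .nu X (neg φ)
  | .nu X φ  => .mu X (neg φ)

/-- `Inv(ψ) = νX.(ψ ∧ ⋀_{α ∈ Ag} [α]X)`. -/
noncomputable def InvF [Fintype Ag] (X : LVar) (ψ : Formula Ag PVar LVar) : Formula Ag PVar LVar :=
  .nu X (.and ψ (listAnd ((Finset.univ : Finset Ag).toList.map fun α => .box α (.var X))))

/-- The finite set of subformulas of a formula. -/
def sub [DecidableEq Ag] [DecidableEq PVar] [DecidableEq LVar] :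
    Formula Ag PVar LVar → Finset (Formula Ag PVar LVar)
  | .prop p  => {.prop p}
  | .nprop p => {.nprop p}
  | .tt      => {.tt}
  | .ff      => {.ff}
  | .var X   => {.var X}
  | .and φ ψ => insert (.and φ ψ) (sub φ ∪ sub ψ)
  | .or φ ψ  => insert (.or φ ψ) (sub φ ∪ sub ψ)
  | .dia α φ => insert (.dia α φ) (sub φ)
  | .box α φ => insert (.box α φ) (sub φ)
  | .mu X φ  => insert (.mu X φ) (sub φ)
  | .nu X φ  => insert (.nu X φ) (sub φ)

/-- `s̄ub(φ) = sub(φ) ∪ {¬ψ | ψ ∈ sub(φ)}`. -/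
def sbar [DecidableEq Ag] [DecidableEq PVar] [DecidableEq LVar]
    (φ : Formula Ag PVar LVar) : Finset (Formula Ag PVar LVar) :=
  sub φ ∪ (sub φ).image neg



/-! ### Infinite traces with finitely many marks -/

/-- Every infinite `E`-path contains only finitely many `Mk`-edges. -/
def FinMarks {X : Type} (E Mk : X → X → Prop) : Prop :=
  ∀ f : ℕ → X, (∀ n, E (f n) (f (n + 1))) → ¬ ∃ᶠ n in Filter.atTop, Mk (f n) (f (n + 1))

lemma antitone_eventually_const {O : Type*} [LinearOrder O] [WellFoundedLT O] (g : ℕ → O) (N : ℕ)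
    (h : ∀ n ≥ N, g (n + 1) ≤ g n) : ∃ N' ≥ N, ∀ n ≥ N', g n = g N' := by
  obtain ⟨_, ⟨⟨N', hN', rfl⟩, hmin⟩⟩ :=
    WellFounded.has_min (wellFounded_lt (α := O)) (g '' {n | N ≤ n}) ⟨_, N, le_refl N, rfl⟩
  refine ⟨N', hN', fun n hn => ?_⟩
  have hle : g n ≤ g N' := by
    induction n, hn using Nat.le_induction with
    | base => exact le_rfl
    | succ n hn ih => exact (h n (le_trans hN' hn)).trans ih
  exact le_antisymm hle (not_lt.mp (hmin _ ⟨n, le_trans hN' hn, rfl⟩))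

lemma no_frequently_lt {O : Type*} [LinearOrder O] [WellFoundedLT O] (g : ℕ → O) (N : ℕ)
    (h : ∀ n ≥ N, g (n + 1) ≤ g n) : ¬ ∃ᶠ n in Filter.atTop, g (n + 1) < g n := by
  intro hf
  obtain ⟨N', _, hN'⟩ := antitone_eventually_const g N h
  obtain ⟨n, hn, hlt⟩ := Filter.frequently_atTop.mp hf N'
  rw [hN' n hn, hN' (n + 1) (by lia)] at hlt
  exact lt_irrefl _ hlt

/-- `x` reaches, in exactly `n` steps, the source of a marked edge into a point satisfying `B`. -/
def MarkIn {X : Type} (E Mk : X → X → Prop) (B : X → Prop) : ℕ → X → Prop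
  | 0, x => ∃ y, E x y ∧ Mk x y ∧ B y
  | n + 1, x => ∃ y, E x y ∧ MarkIn E Mk B n y

/-- If infinite paths have finitely many marks, then points carry ordinal ranks which never
increase along edges and strictly decrease along marked edges. -/
lemma FinMarks.exists_rank {X : Type} {E Mk : X → X → Prop} (h : FinMarks E Mk) :
    ∃ rk : X → Ordinal.{0}, ∀ x y, E x y → rk y ≤ rk x ∧ (Mk x y → rk y < rk x) := by
  classical
  let r : X → X → Prop := fun y x => ∃ z, Relation.ReflTransGen E x z ∧ E z y ∧ Mk z y
  have hwf : WellFounded r := by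
    refine ⟨fun a => ?_⟩
    by_contra ha
    let B : X → Prop := fun x => ¬ Acc r x
    have hB : ∀ x, B x → ∃ n, MarkIn E Mk B n x := by
      intro x hx
      have : ∃ y, r y x ∧ B y := by
        by_contra hc
        push Not at hc
        exact hx (Acc.intro x fun y hy => not_not.mp (hc y hy))
      obtain ⟨y, ⟨z, hxz, hzy, hm⟩, hy⟩ := this
      induction hxz using Relation.ReflTransGen.head_induction_on with
      | refl => exact ⟨0, y, hzy, hm, hy⟩
      | @head a' c hac hr ih =>
        by_cases hb : B c
        · obtain ⟨n, hn⟩ := ih hb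
          exact ⟨n + 1, _, hac, hn⟩
        · exact absurd ((not_not.mp hb).inv ⟨z, hr, hzy, hm⟩) hy
    let S := {p : ℕ × X // MarkIn E Mk B p.1 p.2}
    have hnext : ∀ σ : S, ∃ τ : S, E σ.1.2 τ.1.2 ∧ (σ.1.1 = 0 → Mk σ.1.2 τ.1.2) ∧
        (σ.1.1 ≠ 0 → τ.1.1 + 1 = σ.1.1) := by
      rintro ⟨⟨n, x⟩, hn⟩
      cases n with
      | zero =>
        obtain ⟨y, hxy, hm, hy⟩ := hn
        obtain ⟨k, hk⟩ := hB y hy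
        exact ⟨⟨(k, y), hk⟩, hxy, fun _ => hm, fun h => absurd rfl h⟩
      | succ n =>
        obtain ⟨y, hxy, hy⟩ := hn
        exact ⟨⟨(n, y), hy⟩, hxy, fun h => absurd h (Nat.succ_ne_zero n), fun _ => rfl⟩
    choose nxt h1 h2 h3 using hnext
    obtain ⟨n0, hn0⟩ := hB a ha
    let f : ℕ → S := fun n => nxt^[n] ⟨(n0, a), hn0⟩
    have hf : ∀ n, f (n + 1) = nxt (f n) := fun n => Function.iterate_succ_apply' _ _ _
    refine h (fun n => (f n).1.2) (fun n => by rw [hf]; exact h1 _) ?_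
    rw [Filter.frequently_atTop]
    intro N
    obtain ⟨k, hk⟩ : ∃ k, k = (f N).1.1 := ⟨_, rfl⟩
    induction k generalizing N with
    | zero => exact ⟨N, le_rfl, by rw [hf]; exact h2 _ hk.symm⟩
    | succ k ih =>
      have := h3 (f N) (by lia)
      rw [← hf] at this
      obtain ⟨n, hn, hm⟩ := ih (N + 1) (by lia)
      exact ⟨n, by lia, hm⟩
  have : IsWellFounded X r := ⟨hwf⟩
  refine ⟨IsWellFounded.rank r, fun x y hxy => ⟨?_, fun hm => ?_⟩⟩
  · rw [IsWellFounded.rank_eq r y]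
    refine Ordinal.iSup_le ?_
    rintro ⟨b, z, hz, hzb, hm⟩
    exact Order.succ_le_of_lt (IsWellFounded.rank_lt_of_rel ⟨z, hz.head hxy, hzb, hm⟩)
  · exact IsWellFounded.rank_lt_of_rel ⟨x, .refl, hxy, hm⟩


/-! ### Age-ordered rank values -/

section Ages

variable {I : Type} {O : Type*}

/-- `p` assigns ages to the values of `r`: two items get the same age iff they have the same
value. Smaller numbers are older. -/
def IsAge (r : I → O) (p : I → ℕ) : Prop := ∀ x y, p x = p y ↔ r x = r y

open Classical in
/-- The value of age `j`, and `⊤` if no value has age `j`. -/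
noncomputable def thr (r : I → O) (p : I → ℕ) (j : ℕ) : WithTop O :=
  if h : ∃ x, p x = j then (r h.choose : WithTop O) else ⊤

lemma thr_age {r : I → O} {p : I → ℕ} (h : IsAge r p) (x : I) : thr r p (p x) = r x := by
  have hx : ∃ y, p y = p x := ⟨x, rfl⟩
  rw [thr, dif_pos hx, (h _ _).mp hx.choose_spec]

lemma thr_of_not {r : I → O} {p : I → ℕ} {j : ℕ} (h : ¬ ∃ x, p x = j) : thr r p j = ⊤ := by
  rw [thr, dif_neg h]

variable [LinearOrder O]

/-- `r' y` is the largest value of `r'` not exceeding `r x`. -/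
def IsFloor (r r' : I → O) (x y : I) : Prop := r' y ≤ r x ∧ ∀ z, r' z ≤ r x → r' z ≤ r' y

lemma le_thr_iff {r r' : I → O} {p : I → ℕ} (hs : ∀ x y, r x ≤ r y ↔ r' x ≤ r' y)
    (h : IsAge r p) (h' : IsAge r' p) (x : I) (j : ℕ) :
    (r x : WithTop O) ≤ thr r p j ↔ (r' x : WithTop O) ≤ thr r' p j := by
  by_cases hj : ∃ y, p y = j
  · obtain ⟨y, rfl⟩ := hj
    rw [thr_age h, thr_age h', WithTop.coe_le_coe, WithTop.coe_le_coe, hs]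
  · simp [thr_of_not hj]

lemma lt_thr_iff {r r' : I → O} {p : I → ℕ} (hs : ∀ x y, r x ≤ r y ↔ r' x ≤ r' y)
    (h : IsAge r p) (h' : IsAge r' p) (x : I) (j : ℕ) :
    (r x : WithTop O) < thr r p j ↔ (r' x : WithTop O) < thr r' p j := by
  by_cases hj : ∃ y, p y = j
  · obtain ⟨y, rfl⟩ := hj
    rw [thr_age h, thr_age h', WithTop.coe_lt_coe, WithTop.coe_lt_coe, lt_iff_not_ge, lt_iff_not_ge,
      hs]
  · simp [thr_of_not hj]

lemma exists_isFloor [Finite I] (r r' : I → O) (x z : I) (hz : r' z ≤ r x) :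
    ∃ y, IsFloor r r' x y := by
  obtain ⟨y, hy, hmax⟩ := Set.exists_max_image {z | r' z ≤ r x} r' (Set.toFinite _) ⟨z, hz⟩
  exact ⟨y, hy, hmax⟩

/-- Ages can be updated from the values `r` to the values `r'`: every value moves down to its
floor, where the oldest value with a given floor determines the seniority of that floor, and values
that are nobody's floor become the youngest. All ages below `d` survive; a value of
age at least `d` becomes strictly older. -/
lemma exists_age_update [Fintype I] (r r' : I → O) (p : I → ℕ) (hp : IsAge r p)
    (hpm : ∀ x, p x < Fintype.card I) :
    ∃ (p' : I → ℕ) (d : ℕ), IsAge r' p' ∧ (∀ x, p' x < Fintype.card I) ∧ d ≤ Fintype.card I ∧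
      (∀ j < d, thr r' p' j ≤ thr r p j) ∧
      ∀ x y, IsFloor r r' x y → p' y ≤ p x ∧ (d ≤ p x → p' y < p x) := by
  classical
  set m := Fintype.card I with hm
  let low : I → ℕ := fun y => (Finset.univ.filter fun z => r' z < r' y).card
  let src : I → Finset ℕ := fun y => (Finset.univ.filter fun x => IsFloor r r' x y).image p
  let key : I → ℕ := fun y => if h : (src y).Nonempty then (src y).min' h else m + 1 + low y
  have hfl : ∀ x y y', r' y = r' y' → IsFloor r r' x y → IsFloor r r' x y' := by
    intro x y y' h hf
    exact ⟨h ▸ hf.1, h ▸ hf.2⟩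
  have hkey_src : ∀ y, key y < m + 1 → ∃ x, IsFloor r r' x y ∧ p x = key y := by
    intro y hy
    by_cases h : (src y).Nonempty
    · have h2 : key y = (src y).min' h := dif_pos h
      have h3 := (src y).min'_mem h
      rw [← h2] at h3
      simpa [src] using h3
    · have h2 : key y = m + 1 + low y := dif_neg h
      lia
  have hkey_le : ∀ x y, IsFloor r r' x y → key y ≤ p x := by
    intro x y hxy
    have hx : p x ∈ src y := by
      simp only [src, Finset.mem_image, Finset.mem_filter, Finset.mem_univ, true_and]
      exact ⟨x, hxy, rfl⟩
    have h : (src y).Nonempty := ⟨_, hx⟩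
    have h2 : key y = (src y).min' h := dif_pos h
    rw [h2]
    exact Finset.min'_le _ _ hx
  have hkey_low : ∀ y, ¬ key y < m + 1 → key y = m + 1 + low y := by
    intro y hy
    by_cases h : (src y).Nonempty
    · obtain ⟨x, hx⟩ := h
      simp only [src, Finset.mem_image, Finset.mem_filter, Finset.mem_univ, true_and] at hx
      obtain ⟨x, hx, -⟩ := hx
      have := hkey_le x y hx
      have := hpm x
      lia
    · exact dif_neg h
  have hkey_ne : ∀ y, key y ≠ m := by
    intro y hy
    obtain ⟨x, -, hx⟩ := hkey_src y (by lia)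
    have := hpm x
    lia
  have hkey_iff : ∀ y y', key y = key y' ↔ r' y = r' y' := by
    intro y y'
    constructor
    · intro h
      by_cases hy : key y < m + 1
      · obtain ⟨x, hx, hpx⟩ := hkey_src y hy
        obtain ⟨x', hx', hpx'⟩ := hkey_src y' (h ▸ hy)
        have hxx : r x = r x' := (hp x x').mp (by rw [hpx, hpx', h])
        apply le_antisymm
        · exact hx'.2 _ (hxx ▸ hx.1)
        · exact hx.2 _ (hxx ▸ hx'.1)
      · have h1 := hkey_low y hy
        have h2 := hkey_low y' (h ▸ hy)
        have hlow : ∀ a b, r' a < r' b → low a < low b := by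
          intro a b hab
          apply Finset.card_lt_card
          refine Finset.ssubset_iff_of_subset ?_ |>.mpr ⟨a, by simpa using hab, by simp⟩
          intro z hz
          simp only [Finset.mem_filter, Finset.mem_univ, true_and] at hz ⊢
          exact hz.trans hab
        rcases lt_trichotomy (r' y) (r' y') with hlt | heq | hlt
        · have := hlow _ _ hlt
          lia
        · exact heq
        · have := hlow _ _ hlt
          lia
    · intro h
      have h1 : src y = src y' := by
        simp only [src]
        congr 1
        ext x
        simp only [Finset.mem_filter, Finset.mem_univ, true_and]
        exact ⟨hfl x y y' h, hfl x y' y h.symm⟩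
      have h2 : low y = low y' := by simp only [low, h]
      simp only [key, h1, h2]
  let K : Finset ℕ := Finset.univ.image key
  have hK : ∀ y, key y ∈ K := fun y => Finset.mem_image_of_mem _ (Finset.mem_univ y)
  let rnk : ℕ → ℕ := fun k => (K.filter (· < k)).card
  have hrnk_lt : ∀ k ∈ K, ∀ k', k < k' → rnk k < rnk k' := by
    intro k hk k' hkk
    apply Finset.card_lt_card
    refine Finset.ssubset_iff_of_subset ?_ |>.mpr ⟨k, by simp [hk, hkk], by simp⟩
    intro z hz
    simp only [Finset.mem_filter] at hz ⊢
    exact ⟨hz.1, hz.2.trans hkk⟩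
  have hex : ∃ d, d ∉ K := ⟨m, by simpa [K] using hkey_ne⟩
  let d := Nat.find hex
  have hdK : d ∉ K := Nat.find_spec hex
  have hdmin : ∀ j < d, j ∈ K := fun j hj => not_not.mp (Nat.find_min hex hj)
  have hdm : d ≤ m := Nat.find_min' hex (by simpa [K] using hkey_ne)
  have hrnk_le : ∀ k, rnk k ≤ k := by
    intro k
    calc rnk k ≤ (Finset.range k).card := Finset.card_le_card (by intro z; simp)
      _ = k := Finset.card_range k
  have hrnk_eq : ∀ k ≤ d, rnk k = k := by
    intro k hk
    have : K.filter (· < k) = Finset.range k := by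
      ext z
      simp only [Finset.mem_filter, Finset.mem_range]
      exact ⟨fun h => h.2, fun h => ⟨hdmin z (by lia), h⟩⟩
    simp only [rnk, this, Finset.card_range]
  have hrnk_d : ∀ k, d < k → rnk k < k := by
    intro k hk
    calc rnk k < (Finset.range k).card := by
          apply Finset.card_lt_card
          refine Finset.ssubset_iff_of_subset (by intro z; simp) |>.mpr ⟨d, by simpa using hk, ?_⟩
          simp [hdK]
      _ = k := Finset.card_range k
  have hp' : IsAge r' (fun y => rnk (key y)) := by
    intro y y'
    rw [← hkey_iff]
    refine ⟨fun h => ?_, fun h => by simp only [h]⟩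
    rcases lt_trichotomy (key y) (key y') with hlt | heq | hlt
    · have := hrnk_lt _ (hK y) _ hlt
      lia
    · exact heq
    · have := hrnk_lt _ (hK y') _ hlt
      lia
  refine ⟨fun y => rnk (key y), d, hp', ?_, hdm, ?_, ?_⟩
  · intro y
    calc rnk (key y) < K.card := by
          apply Finset.card_lt_card
          exact Finset.ssubset_iff_of_subset (Finset.filter_subset _ _) |>.mpr
            ⟨key y, hK y, by simp⟩
      _ ≤ m := Finset.card_image_le
  · intro j hj
    obtain ⟨y, -, hy⟩ := Finset.mem_image.mp (hdmin j hj)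
    obtain ⟨x, hxy, hpx⟩ := hkey_src y (by lia)
    have h1 : rnk (key y) = j := by rw [hy]; exact hrnk_eq j hj.le
    have h2 := thr_age hp' y
    simp only [h1] at h2
    have h3 := thr_age hp x
    rw [hpx, hy] at h3
    rw [h2, h3]
    exact WithTop.coe_le_coe.mpr hxy.1
  · intro x y hxy
    have h1 := hkey_le x y hxy
    refine ⟨(hrnk_le _).trans h1, fun hd => ?_⟩
    show rnk (key y) < p x
    rcases lt_trichotomy (key y) d with hlt | heq | hlt
    · have := hrnk_le (key y)
      lia
    · exact absurd (heq ▸ hK y) hdK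
    · have := hrnk_d _ hlt
      lia


/-- The combinatorial core. Along a sequence of points with values `ru n` and ages `p n`, step `n`
first passes to values `rv n` with updated ages, and then to a point with the same ages and
order pattern whose age-indexed vector of values is lexicographically at most that of `rv n`.
Then no sequence of items with non-increasing values drops strictly infinitely often.

With `i` the least bound that the `d n` reach infinitely often, the values of age below `i` are
eventually constant. The trace `x` eventually stays strictly between two of them, and the age of
the oldest value above the trace in that gap is non-increasing and drops whenever `d n ≤ i`. -/
lemma no_bad_trace [Finite I] [WellFoundedLT O] (m : ℕ) (ru rv : ℕ → I → O) (p : ℕ → I → ℕ)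
    (d : ℕ → ℕ) (x : ℕ → I)
    (hu : ∀ n, IsAge (ru n) (p n)) (hv : ∀ n, IsAge (rv n) (p (n + 1)))
    (hs : ∀ n a b, rv n a ≤ rv n b ↔ ru (n + 1) a ≤ ru (n + 1) b)
    (hd : ∀ n, d n ≤ m)
    (hlex : ∀ n, ∀ l < m, (∀ k < l, thr (ru (n + 1)) (p (n + 1)) k = thr (rv n) (p (n + 1)) k) →
      thr (ru (n + 1)) (p (n + 1)) l ≤ thr (rv n) (p (n + 1)) l)
    (hthr : ∀ n, ∀ j < d n, thr (rv n) (p (n + 1)) j ≤ thr (ru n) (p n) j)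
    (hfl : ∀ n a b, IsFloor (ru n) (rv n) a b →
      p (n + 1) b ≤ p n a ∧ (d n ≤ p n a → p (n + 1) b < p n a))
    (hx : ∀ n, rv n (x (n + 1)) ≤ ru n (x n)) :
    ¬ ∃ᶠ n in Filter.atTop, rv n (x (n + 1)) < ru n (x n) := by
  classical
  intro hfreq
  have hexi : ∃ i, ∃ᶠ n in Filter.atTop, d n ≤ i :=
    ⟨m, (Filter.Eventually.of_forall hd).frequently⟩
  obtain ⟨i, hi, hmin⟩ : ∃ i, (∃ᶠ n in Filter.atTop, d n ≤ i) ∧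
      ∀ j < i, ¬ ∃ᶠ n in Filter.atTop, d n ≤ j :=
    ⟨Nat.find hexi, Nat.find_spec hexi, fun j hj => Nat.find_min hexi hj⟩
  have him : i ≤ m := by
    by_contra hc
    exact hmin m (by lia) (Filter.Eventually.of_forall hd).frequently
  obtain ⟨N0, hN0⟩ : ∃ N, ∀ n ≥ N, i ≤ d n := by
    rcases Nat.eq_zero_or_pos i with h0 | h0
    · exact ⟨0, fun n _ => by lia⟩
    · have h1 := hmin (i - 1) (by lia)
      rw [Filter.not_frequently, Filter.eventually_atTop] at h1
      obtain ⟨N, hN⟩ := h1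
      exact ⟨N, fun n hn => by have := hN n hn; lia⟩
  let c : ℕ → ℕ → WithTop O := fun n => thr (ru n) (p n)
  let c' : ℕ → ℕ → WithTop O := fun n => thr (rv n) (p (n + 1))
  have hc'c : ∀ n ≥ N0, ∀ l < i, c' n l ≤ c n l := fun n hn l hl =>
    hthr n l (lt_of_lt_of_le hl (hN0 n hn))
  -- if the older values agree at `n` and `n + 1`, they also agree at the intermediate point
  have hstep : ∀ n ≥ N0, ∀ j ≤ i, (∀ l < j, c (n + 1) l = c n l) →
      ∀ l < j, c' n l = c n l := by
    intro n hn j hj hconst l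
    induction l using Nat.strong_induction_on with
    | _ l ih =>
      intro hl
      have h1 : c (n + 1) l ≤ c' n l := hlex n l (by lia) fun k hk => by
        have := ih k hk (by lia)
        have h2 := hconst k (by lia)
        simp only [c, c'] at this h2 ⊢
        rw [h2, this]
      have h2 := hc'c n hn l (by lia)
      rw [hconst l hl] at h1
      exact le_antisymm h2 h1
  have hstab : ∀ j ≤ i, ∃ N ≥ N0, ∀ n ≥ N, ∀ l < j, c n l = c N l := by
    intro j
    induction j with
    | zero => exact fun _ => ⟨N0, le_rfl, fun n _ l hl => absurd hl (Nat.not_lt_zero l)⟩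
    | succ j ih =>
      intro hj
      obtain ⟨N, hN, hc⟩ := ih (by lia)
      obtain ⟨N', hN', hc2⟩ := antitone_eventually_const (fun n => c n j) N (by
        intro n hn
        have hconst : ∀ l < j, c (n + 1) l = c n l := fun l hl => by
          rw [hc n hn l hl, hc (n + 1) (by lia) l hl]
        have h1 := hstep n (by lia) j (by lia) hconst
        have h2 : c (n + 1) j ≤ c' n j := hlex n j (by lia) fun k hk => by
          have := h1 k hk
          have h2 := hconst k hk
          simp only [c, c'] at this h2 ⊢
          rw [h2, this]
        exact h2.trans (hc'c n (by lia) j (by lia)))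
      refine ⟨N', by lia, fun n hn l hl => ?_⟩
      rcases Nat.lt_succ_iff_lt_or_eq.mp hl with h | rfl
      · rw [hc n (by lia) l h, hc N' (by lia) l h]
      · exact hc2 n hn
  obtain ⟨N1, hN1, hcu⟩ := hstab i le_rfl
  obtain ⟨f, hf⟩ : ∃ f : ℕ → WithTop O, f = c N1 := ⟨_, rfl⟩
  rw [← hf] at hcu
  have hcv : ∀ n ≥ N1, ∀ l < i, c' n l = f l := by
    intro n hn l hl
    rw [hstep n (by lia) i le_rfl (fun l hl => by rw [hcu n hn l hl, hcu (n + 1) (by lia) l hl]) l hl]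
    exact hcu n hn l hl
  -- transfer of comparisons with the stable values across the replacement of `rv n`
  have hle_tr : ∀ n ≥ N1, ∀ l < i, ∀ y, (rv n y : WithTop O) ≤ f l →
      (ru (n + 1) y : WithTop O) ≤ f l := by
    intro n hn l hl y h
    rw [← hcv n hn l hl] at h
    have := (le_thr_iff (hs n) (hv n) (hu (n + 1)) y l).mp h
    rwa [← hcu (n + 1) (by lia) l hl]
  have hlt_tr : ∀ n ≥ N1, ∀ l < i, ∀ y, (rv n y : WithTop O) < f l →
      (ru (n + 1) y : WithTop O) < f l := by
    intro n hn l hl y h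
    rw [← hcv n hn l hl] at h
    have := (lt_thr_iff (hs n) (hv n) (hu (n + 1)) y l).mp h
    rwa [← hcu (n + 1) (by lia) l hl]
  have hx' : ∀ n, (rv n (x (n + 1)) : WithTop O) ≤ ru n (x n) := fun n =>
    WithTop.coe_le_coe.mpr (hx n)
  have hmono : ∀ l < i, ∀ n ≥ N1, (ru n (x n) : WithTop O) ≤ f l →
      ∀ k ≥ n, (ru k (x k) : WithTop O) ≤ f l := by
    intro l hl n hn h k hk
    induction k, hk using Nat.le_induction with
    | base => exact h
    | succ k hk ih => exact hle_tr k (by lia) l hl _ ((hx' k).trans ih)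
  have hmono' : ∀ l < i, ∀ n ≥ N1, (ru n (x n) : WithTop O) < f l →
      ∀ k ≥ n, (ru k (x k) : WithTop O) < f l := by
    intro l hl n hn h k hk
    induction k, hk using Nat.le_induction with
    | base => exact h
    | succ k hk ih => exact hlt_tr k (by lia) l hl _ ((hx' k).trans_lt ih)
  obtain ⟨N2, hN2, hF⟩ : ∃ N2 ≥ N1, ∀ n ≥ N2, ∀ l < i, (ru n (x n) : WithTop O) ≤ f l →
      (ru N2 (x N2) : WithTop O) ≤ f l := by
    have : ∀ l < i, ∀ᶠ N in Filter.atTop, ∀ n ≥ N, (ru n (x n) : WithTop O) ≤ f l →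
        (ru N (x N) : WithTop O) ≤ f l := by
      intro l hl
      by_cases h : ∃ n ≥ N1, (ru n (x n) : WithTop O) ≤ f l
      · obtain ⟨n, hn, hle⟩ := h
        exact Filter.eventually_atTop.mpr ⟨n, fun N hN _ _ _ => hmono l hl n hn hle N hN⟩
      · exact Filter.eventually_atTop.mpr ⟨N1, fun N hN n hn hle =>
          absurd ⟨n, by lia, hle⟩ h⟩
    have hall : ∀ᶠ N in Filter.atTop, ∀ l ∈ Finset.range i, ∀ n ≥ N,
        (ru n (x n) : WithTop O) ≤ f l → (ru N (x N) : WithTop O) ≤ f l :=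
      (Finset.eventually_all _).mpr fun l hl => this l (Finset.mem_range.mp hl)
    obtain ⟨N2, h1, h2⟩ := (hall.and (Filter.eventually_ge_atTop N1)).exists
    exact ⟨N2, h2, fun n hn l hl => h1 l (Finset.mem_range.mpr hl) n hn⟩
  -- after one more strict drop the trace differs from every stable value
  obtain ⟨n0, hn0, hdrop⟩ := Filter.frequently_atTop.mp hfreq N2
  have hgap : ∀ n ≥ n0 + 1, ∀ l < i, (ru n (x n) : WithTop O) ≤ f l →
      (ru n (x n) : WithTop O) < f l := by
    intro n hn l hl h
    have h1 := hmono l hl N2 (by lia) (hF n (by lia) l hl h) n0 hn0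
    have h2 := hlt_tr n0 (by lia) l hl (x (n0 + 1))
      ((WithTop.coe_lt_coe.mpr hdrop).trans_le h1)
    exact hmono' l hl (n0 + 1) (by lia) h2 n hn
  let C : ℕ → I → Prop := fun n y => ru n (x n) ≤ ru n y ∧
    ∀ l < i, (ru N2 (x N2) : WithTop O) ≤ f l → (ru n y : WithTop O) < f l
  have hCx : ∀ n ≥ n0 + 1, C n (x n) := fun n hn => ⟨le_rfl, fun l hl h =>
    hgap n hn l hl (hmono l hl N2 (by lia) h n (by lia))⟩
  have hCi : ∀ n ≥ n0 + 1, ∀ y, C n y → i ≤ p n y := by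
    intro n hn y hy
    by_contra hlt
    push Not at hlt
    have h1 : f (p n y) = ru n y := by
      rw [← hcu n (by lia) _ hlt]
      exact thr_age (hu n) y
    have h2 : (ru n (x n) : WithTop O) ≤ f (p n y) := by
      rw [h1]
      exact WithTop.coe_le_coe.mpr hy.1
    have h3 := hy.2 _ hlt (hF n (by lia) _ hlt h2)
    rw [h1] at h3
    exact lt_irrefl _ h3
  have hCstep : ∀ n ≥ n0 + 1, ∀ y, C n y → ∃ w, C (n + 1) w ∧ p (n + 1) w ≤ p n y ∧
      (d n ≤ i → p (n + 1) w < p n y) := by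
    intro n hn y hy
    obtain ⟨w, hw⟩ := exists_isFloor (ru n) (rv n) y (x (n + 1)) ((hx n).trans hy.1)
    refine ⟨w, ⟨?_, fun l hl h => ?_⟩, (hfl n y w hw).1, fun hdi => (hfl n y w hw).2 ?_⟩
    · exact (hs n _ _).mp (hw.2 _ ((hx n).trans hy.1))
    · exact hlt_tr n (by lia) l hl w
        ((WithTop.coe_le_coe.mpr hw.1).trans_lt (hy.2 l hl h))
    · exact hdi.trans (hCi n hn y hy)
  have hexA : ∀ n, n ≥ n0 + 1 → ∃ k, ∃ y, C n y ∧ p n y = k := fun n hn => ⟨_, x n, hCx n hn, rfl⟩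
  let A : ℕ → ℕ := fun n => if h : n ≥ n0 + 1 then Nat.find (hexA n h) else 0
  have hA : ∀ n ≥ n0 + 1, ∃ y, C n y ∧ p n y = A n := by
    intro n hn
    simp only [A, dif_pos hn]
    exact Nat.find_spec (hexA n hn)
  have hAle : ∀ n ≥ n0 + 1, ∀ y, C n y → A n ≤ p n y := by
    intro n hn y hy
    simp only [A, dif_pos hn]
    exact Nat.find_min' (hexA n hn) ⟨y, hy, rfl⟩
  refine no_frequently_lt A (n0 + 1) ?_ ?_
  · intro n hn
    obtain ⟨y, hy, hp⟩ := hA n hn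
    obtain ⟨w, hw, hle, -⟩ := hCstep n hn y hy
    exact (hAle (n + 1) (by lia) w hw).trans (hp ▸ hle)
  · refine (hi.and_eventually (Filter.eventually_ge_atTop (n0 + 1))).mono ?_
    rintro n ⟨hdn, hn⟩
    obtain ⟨y, hy, hp⟩ := hA n hn
    obtain ⟨w, hw, -, hlt⟩ := hCstep n hn y hy
    exact lt_of_le_of_lt (hAle (n + 1) (by lia) w hw) (hp ▸ hlt hdn)

/-- Compression: points of `W` carrying labels and ranks are represented by finitely many points
`f a`, and every jump to a point `t` can be redirected to a representative `nx a t` with the same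
label, so that traces through redirected jumps still cannot drop infinitely often. -/
theorem compress {W Λ : Type} [Fintype I] [Fintype Λ] [WellFoundedLT O] (r : W → I → O)
    (lab : W → Λ) :
    ∃ (A : Type) (_ : Fintype A) (f : A → W) (nx : A → W → A),
      Fintype.card A ≤ Fintype.card Λ * (Fintype.card I ^ Fintype.card I *
        2 ^ (Fintype.card I * Fintype.card I)) ∧
      (∀ t, ∃ a, lab (f a) = lab t) ∧ (∀ a t, lab (f (nx a t)) = lab t) ∧
      ∀ (a : ℕ → A) (t : ℕ → W) (x : ℕ → I),
        (∀ n, (a (n + 1) = a n ∧ t n = f (a n)) ∨ a (n + 1) = nx (a n) (t n)) →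
        (∀ n, r (t n) (x (n + 1)) ≤ r (f (a n)) (x n)) →
        ¬ ∃ᶠ n in Filter.atTop, r (t n) (x (n + 1)) < r (f (a n)) (x n) := by
  classical
  let m := Fintype.card I
  let Node := {u : W × (I → Fin m) // IsAge (r u.1) (fun x => (u.2 x : ℕ))}
  let ab : Node → Λ × (I → Fin m) × (I → I → Bool) := fun u =>
    (lab u.1.1, u.1.2, fun x y => decide (r u.1.1 x ≤ r u.1.1 y))
  let vec : Node → Fin m → WithTop O := fun u j => thr (r u.1.1) (fun x => (u.1.2 x : ℕ)) j
  let A := {a : Λ × (I → Fin m) × (I → I → Bool) // ∃ u, ab u = a}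
  have hrep : ∀ a : A, ∃ u : Node, ab u = a.1 ∧ ∀ v, ab v = a.1 →
      ¬ Pi.Lex (· < ·) (· < ·) (vec v) (vec u) := by
    intro a
    have hwf : WellFounded (fun x y : Fin m → WithTop O => Pi.Lex (· < ·) (· < ·) x y) :=
      (Function.Lex.wellFoundedLT (ι := Fin m) (α := WithTop O)).wf
    obtain ⟨u, hu, hmin⟩ := WellFounded.has_min (InvImage.wf vec hwf) {u | ab u = a.1} a.2
    exact ⟨u, hu, fun v hv => hmin v hv⟩
  choose rep hrep1 hrep2 using hrep
  have hupd : ∀ (u : Node) (t : W), ∃ (v : Node) (d : ℕ), v.1.1 = t ∧ d ≤ m ∧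
      (∀ j < d, thr (r v.1.1) (fun x => (v.1.2 x : ℕ)) j ≤ thr (r u.1.1) (fun x => (u.1.2 x : ℕ)) j) ∧
      ∀ x y, IsFloor (r u.1.1) (r v.1.1) x y →
        (v.1.2 y : ℕ) ≤ u.1.2 x ∧ (d ≤ u.1.2 x → (v.1.2 y : ℕ) < u.1.2 x) := by
    intro u t
    obtain ⟨p', d, h1, h2, h3, h4, h5⟩ :=
      exists_age_update (r u.1.1) (r t) (fun x => (u.1.2 x : ℕ)) u.2 (fun x => (u.1.2 x).2)
    exact ⟨⟨(t, fun x => ⟨p' x, h2 x⟩), h1⟩, d, rfl, h3, h4, h5⟩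
  choose upd dd hu1 hu2 hu3 hu4 using hupd
  have hlab : ∀ (a : A) (u : Node), ab u = a.1 → lab (rep a).1.1 = lab u.1.1 := by
    intro a u hu
    have := (hrep1 a).trans hu.symm
    exact congrArg Prod.fst this
  refine ⟨A, inferInstance, fun a => (rep a).1.1, fun a t => ⟨ab (upd (rep a) t), _, rfl⟩,
    ?_, ?_, ?_, ?_⟩
  · refine (Fintype.card_subtype_le _).trans (le_of_eq ?_)
    simp [m, ← pow_mul]
  · intro t
    -- the ages of an arbitrary point are obtained by updating the constant values
    have hex : ∃ u : Node, u.1.1 = t := by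
      rcases isEmpty_or_nonempty I with hI | ⟨⟨i0⟩⟩
      · exact ⟨⟨(t, fun x => (hI.false x).elim), fun x => (hI.false x).elim⟩, rfl⟩
      · obtain ⟨p', d, h1, h2, -⟩ := exists_age_update (fun _ => r t i0) (r t) (fun _ => 0)
          (fun _ _ => by simp) (fun _ => Fintype.card_pos_iff.mpr ⟨i0⟩)
        exact ⟨⟨(t, fun x => ⟨p' x, h2 x⟩), h1⟩, rfl⟩
    obtain ⟨u, rfl⟩ := hex
    exact ⟨⟨ab u, u, rfl⟩, hlab _ u rfl⟩
  · intro a t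
    rw [hlab _ _ rfl, hu1]
  · intro a t x hstep hx
    -- the intermediate node of each step, together with its `d`
    have hv : ∀ n, ∃ (v : Node) (d : ℕ), v.1.1 = t n ∧ ab v = (a (n + 1)).1 ∧ d ≤ m ∧
        (∀ j < d, thr (r v.1.1) (fun x => (v.1.2 x : ℕ)) j ≤
          thr (r (rep (a n)).1.1) (fun x => ((rep (a n)).1.2 x : ℕ)) j) ∧
        ∀ x y, IsFloor (r (rep (a n)).1.1) (r v.1.1) x y →
          (v.1.2 y : ℕ) ≤ (rep (a n)).1.2 x ∧
            (d ≤ (rep (a n)).1.2 x → (v.1.2 y : ℕ) < (rep (a n)).1.2 x) := by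
      intro n
      rcases hstep n with ⟨h1, h2⟩ | h1
      · refine ⟨rep (a n), m, h2.symm, by rw [h1]; exact hrep1 _, le_rfl, fun _ _ => le_rfl, ?_⟩
        intro x y hxy
        have : r (rep (a n)).1.1 y = r (rep (a n)).1.1 x := le_antisymm hxy.1 (hxy.2 x le_rfl)
        have h3 := ((rep (a n)).2 y x).mpr this
        refine ⟨h3.le, fun hm => ?_⟩
        have := ((rep (a n)).1.2 x).2
        lia
      · exact ⟨upd (rep (a n)) (t n), dd (rep (a n)) (t n), hu1 _ _, by rw [h1], hu2 _ _,
          hu3 _ _, hu4 _ _⟩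
    choose v d hv1 hv2 hv3 hv4 hv5 using hv
    have hab : ∀ n, ab (v n) = ab (rep (a (n + 1))) := fun n => (hv2 n).trans (hrep1 _).symm
    have hage : ∀ n, (v n).1.2 = (rep (a (n + 1))).1.2 := fun n =>
      congrArg (fun z => z.2.1) (hab n)
    have hpat : ∀ n x y, r (v n).1.1 x ≤ r (v n).1.1 y ↔
        r (rep (a (n + 1))).1.1 x ≤ r (rep (a (n + 1))).1.1 y := by
      intro n x y
      have := congrFun (congrFun (congrArg (fun z => z.2.2) (hab n)) x) y
      simpa [ab] using this
    have key := no_bad_trace m (fun n => r (rep (a n)).1.1) (fun n => r (v n).1.1)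
      (fun n x => ((rep (a n)).1.2 x : ℕ)) d x (fun n => (rep (a n)).2)
      (fun n => by rw [← hage n]; exact (v n).2) hpat hv3 ?_
      (fun n j hj => by rw [← hage n]; exact hv4 n j hj)
      (fun n b c h => by rw [← hage n]; exact hv5 n b c h)
      (fun n => by rw [hv1 n]; exact hx n)
    · simpa only [hv1] using key
    · intro n l hl hk
      rw [← not_lt]
      intro hlt
      refine hrep2 (a (n + 1)) (v n) (hv2 n) ⟨⟨l, hl⟩, fun j hj => ?_, ?_⟩
      · have := hk j hj
        simp only [vec, hage n]
        exact this.symm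
      · simp only [vec, hage n]
        exact hlt

end Ages

/-! ### The evaluation automaton -/

/-- A state of the evaluation automaton: an occurrence of a subformula, given by the subformula
together with the list of the fixpoint formulas whose scope it lies in, innermost first. -/
abbrev AState (Ag PVar LVar : Type) : Type :=
  Formula Ag PVar LVar × List (Formula Ag PVar LVar)

section Automaton

variable [DecidableEq LVar]

/-- The body of a fixpoint formula that binds `X`. -/
def bodyOf (X : LVar) : Formula Ag PVar LVar → Option (Formula Ag PVar LVar)
  | .mu Y a => if Y = X then some a else none
  | .nu Y a => if Y = X then some a else none
  | _ => none

/-- The state in which an occurrence of `X` below the binders `e` is unfolded: the body of the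
innermost binder of `X`. -/
def look (X : LVar) : List (Formula Ag PVar LVar) → Option (AState Ag PVar LVar)
  | [] => none
  | f :: e => match bodyOf X f with
    | some a => some (a, f :: e)
    | none => look X e

lemma look_cons_some {X : LVar} {f a : Formula Ag PVar LVar} (e : List (Formula Ag PVar LVar))
    (h : bodyOf X f = some a) : look X (f :: e) = some (a, f :: e) := by
  simp [look, h]

lemma look_cons_none {X : LVar} {f : Formula Ag PVar LVar} (e : List (Formula Ag PVar LVar))
    (h : bodyOf X f = none) : look X (f :: e) = look X e := by
  simp [look, h]

lemma look_suffix {X : LVar} {e : List (Formula Ag PVar LVar)} {q : AState Ag PVar LVar}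
    (h : look X e = some q) : q.2 <:+ e := by
  induction e with
  | nil => simp [look] at h
  | cons f e ih =>
    cases hb : bodyOf X f with
    | some a =>
      rw [look_cons_some e hb] at h
      cases h
      exact List.suffix_rfl
    | none =>
      rw [look_cons_none e hb] at h
      exact (ih h).trans (List.suffix_cons f e)

lemma look_ne_nil {X : LVar} {e : List (Formula Ag PVar LVar)} {q : AState Ag PVar LVar}
    (h : look X e = some q) : q.2 ≠ [] := by
  induction e with
  | nil => simp [look] at h
  | cons f e ih =>
    cases hb : bodyOf X f with
    | some a =>
      rw [look_cons_some e hb] at h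
      cases h
      exact List.cons_ne_nil f e
    | none =>
      rw [look_cons_none e hb] at h
      exact ih h

lemma look_restrict {X : LVar} {e b : List (Formula Ag PVar LVar)} {q : AState Ag PVar LVar}
    (h : look X e = some q) (hb : b <:+ e) (hq : q.2 <:+ b) : look X b = some q := by
  induction e with
  | nil => simp [look] at h
  | cons f e ih =>
    rcases List.suffix_cons_iff.mp hb with rfl | hbe
    · exact h
    · cases hf : bodyOf X f with
      | some a =>
        rw [look_cons_some e hf] at h
        cases h
        have := (hq.trans hbe).length_le
        simp at this
      | none =>
        rw [look_cons_none e hf] at h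
        exact ih h hbe

/-- The transitions of the evaluation automaton. A box may also repeat itself, which is used to
propagate it along transitive relations. -/
def QSucc (q q' : AState Ag PVar LVar) : Prop :=
  match q.1 with
  | .prop _ => False
  | .nprop _ => False
  | .tt => False
  | .ff => False
  | .var X => look X q.2 = some q'
  | .and a b => q' = (a, q.2) ∨ q' = (b, q.2)
  | .or a b => q' = (a, q.2) ∨ q' = (b, q.2)
  | .dia _ a => q' = (a, q.2)
  | .box α a => q' = (a, q.2) ∨ q' = (.box α a, q.2)
  | .mu X a => q' = (a, .mu X a :: q.2)
  | .nu X a => q' = (a, .nu X a :: q.2)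

/-- A suffix of the binder list survives a transition, unless the transition unfolds a variable
bound in that suffix. -/
lemma QSucc.suffix {q q' : AState Ag PVar LVar} (h : QSucc q q')
    {b : List (Formula Ag PVar LVar)} (hb : b <:+ q.2) :
    b <:+ q'.2 ∨ ∃ X, q.1 = .var X ∧ look X q.2 = some q' ∧ q'.2 <:+ b := by
  obtain ⟨ψ, e⟩ := q
  cases ψ <;> simp only [QSucc] at h
  case var X =>
    rcases List.suffix_or_suffix_of_suffix hb (look_suffix h) with h1 | h1
    · exact Or.inl h1
    · exact Or.inr ⟨X, rfl, h, h1⟩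
  case and => rcases h with rfl | rfl <;> exact Or.inl hb
  case or => rcases h with rfl | rfl <;> exact Or.inl hb
  case dia => subst h; exact Or.inl hb
  case box => rcases h with rfl | rfl <;> exact Or.inl hb
  case mu => subst h; exact Or.inl (hb.trans (List.suffix_cons _ _))
  case nu => subst h; exact Or.inl (hb.trans (List.suffix_cons _ _))

/-- The local condition at the position `x` of the evaluation game: all moves (for conjunctions and
boxes) or some move (for disjunctions and diamonds) are `E`-edges. For agents in `tr` the box is
moreover passed on to the successors, and for agents in `rf` its body holds at the point itself. -/
def LocalOk (M : Kripke Ag PVar W) (rf tr : Ag → Prop)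
    (E : W × AState Ag PVar LVar → W × AState Ag PVar LVar → Prop)
    (x : W × AState Ag PVar LVar) : Prop :=
  match x.2.1 with
  | .prop p => p ∈ M.V x.1
  | .nprop p => p ∉ M.V x.1
  | .tt => True
  | .ff => False
  | .var X => ∃ q, look X x.2.2 = some q ∧ E x (x.1, q)
  | .and a b => E x (x.1, a, x.2.2) ∧ E x (x.1, b, x.2.2)
  | .or a b => E x (x.1, a, x.2.2) ∨ E x (x.1, b, x.2.2)
  | .dia α a => ∃ t, M.R α x.1 t ∧ E x (t, a, x.2.2)
  | .box α a => (∀ t, M.R α x.1 t → E x (t, a, x.2.2)) ∧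
      (tr α → ∀ t, M.R α x.1 t → E x (t, .box α a, x.2.2)) ∧ (rf α → E x (x.1, a, x.2.2))
  | .mu X a => E x (x.1, a, .mu X a :: x.2.2)
  | .nu X a => E x (x.1, a, .nu X a :: x.2.2)

lemma LocalOk.mono {M : Kripke Ag PVar W} {rf tr : Ag → Prop}
    {E E' : W × AState Ag PVar LVar → W × AState Ag PVar LVar → Prop}
    {x : W × AState Ag PVar LVar} (h : LocalOk M rf tr E x) (hE : ∀ y, E x y → E' x y) :
    LocalOk M rf tr E' x := by
  obtain ⟨s, ψ, e⟩ := x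
  cases ψ <;> simp only [LocalOk] at h ⊢
  case prop => exact h
  case nprop => exact h
  case var => exact ⟨h.choose, h.choose_spec.1, hE _ h.choose_spec.2⟩
  case and => exact ⟨hE _ h.1, hE _ h.2⟩
  case or => exact h.imp (hE _) (hE _)
  case dia => exact ⟨h.choose, h.choose_spec.1, hE _ h.choose_spec.2⟩
  case box => exact ⟨fun t ht => hE _ (h.1 t ht), fun h1 t ht => hE _ (h.2.1 h1 t ht),
    fun h1 => hE _ (h.2.2 h1)⟩
  case mu => exact hE _ h
  case nu => exact hE _ h

/-- Edges between positions inside the scope of the innermost binder of `b`. -/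
def EdgeIn (E : W × AState Ag PVar LVar → W × AState Ag PVar LVar → Prop)
    (b : List (Formula Ag PVar LVar)) (x y : W × AState Ag PVar LVar) : Prop :=
  E x y ∧ b <:+ x.2.2 ∧ b <:+ y.2.2

/-- The edge unfolds a variable bound by the first formula of `b`. -/
def Unfolds (b : List (Formula Ag PVar LVar)) (x y : W × AState Ag PVar LVar) : Prop :=
  (∃ X, x.2.1 = .var X) ∧ y.2.2 = b

/-- No infinite path unfolds a `μ`-variable infinitely often without leaving its scope. -/
def Good (E : W × AState Ag PVar LVar → W × AState Ag PVar LVar → Prop) : Prop :=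
  ∀ X a e, FinMarks (EdgeIn E (.mu X a :: e)) (Unfolds (.mu X a :: e))

/-- A certificate of truth (an annotated winning strategy in the evaluation game) with positions
`G` and moves `E`. Positions in `T` are taken for granted, all others lie in the scope `base`. -/
structure Cert (M : Kripke Ag PVar W) (rf tr : Ag → Prop) (T : Set (W × AState Ag PVar LVar))
    (base : List (Formula Ag PVar LVar)) (G : Set (W × AState Ag PVar LVar))
    (E : W × AState Ag PVar LVar → W × AState Ag PVar LVar → Prop) : Prop where
  sub : T ⊆ G
  edge : ∀ x y, E x y → x ∈ G ∧ x ∉ T ∧ y ∈ G ∧ QSucc x.2 y.2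
  ok : ∀ x ∈ G, x ∉ T → LocalOk M rf tr E x ∧ base <:+ x.2.2
  good : Good E

/-- The positions that occur in some certificate. -/
def Win (M : Kripke Ag PVar W) (rf tr : Ag → Prop) (T : Set (W × AState Ag PVar LVar))
    (base : List (Formula Ag PVar LVar)) : Set (W × AState Ag PVar LVar) :=
  {x | ∃ G E, Cert M rf tr T base G E ∧ x ∈ G}

lemma FinMarks.tail {X : Type} {E Mk : X → X → Prop} (h : FinMarks E Mk) (f : ℕ → X) (N : ℕ)
    (hf : ∀ n ≥ N, E (f n) (f (n + 1))) : ¬ ∃ᶠ n in Filter.atTop, Mk (f n) (f (n + 1)) := by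
  intro hm
  refine h (fun n => f (n + N)) (fun n => ?_) ?_
  · have := hf (n + N) (by lia)
    rwa [show n + N + 1 = n + 1 + N by lia] at this
  · rw [Filter.frequently_atTop] at hm ⊢
    intro k
    obtain ⟨n, hn, hmk⟩ := hm (k + N)
    refine ⟨n - N, by lia, ?_⟩
    rwa [show n - N + 1 + N = n + 1 by lia, show n - N + N = n by lia]

lemma subset_win (M : Kripke Ag PVar W) (rf tr : Ag → Prop) (T : Set (W × AState Ag PVar LVar))
    (base : List (Formula Ag PVar LVar)) : T ⊆ Win M rf tr T base := by
  intro x hx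
  refine ⟨T, fun _ _ => False, ⟨subset_rfl, ?_, ?_, ?_⟩, hx⟩
  · exact fun _ _ h => h.elim
  · exact fun x hx hx' => absurd hx hx'
  · exact fun _ _ _ f hf => (hf 0).1.elim

/-- All certificates can be merged into one: after well-ordering them, every position follows the
least certificate it belongs to, so that along a path the certificate eventually is constant. -/
lemma exists_max_cert (M : Kripke Ag PVar W) (rf tr : Ag → Prop)
    (T : Set (W × AState Ag PVar LVar)) (base : List (Formula Ag PVar LVar)) :
    ∃ E, Cert M rf tr T base (Win M rf tr T base) E := by
  obtain ⟨C, G, E, hC, hcov⟩ : ∃ (C : Type) (G : C → Set (W × AState Ag PVar LVar))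
      (E : C → W × AState Ag PVar LVar → W × AState Ag PVar LVar → Prop),
      (∀ c, Cert M rf tr T base (G c) (E c)) ∧ ∀ x ∈ Win M rf tr T base, ∃ c, x ∈ G c :=
    ⟨{p : Set (W × AState Ag PVar LVar) × (W × AState Ag PVar LVar →
      W × AState Ag PVar LVar → Prop) // Cert M rf tr T base p.1 p.2}, fun c => c.1.1,
      fun c => c.1.2, fun c => c.2, fun x ⟨G, E, hc, hx⟩ => ⟨⟨(G, E), hc⟩, hx⟩⟩
  obtain ⟨hlin, hwf⟩ := exists_wellFoundedLT C
  have hleast : ∀ x : Win M rf tr T base, ∃ c : C, x.1 ∈ G c ∧ ∀ c' : C, x.1 ∈ G c' → c ≤ c' := by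
    rintro ⟨x, hx⟩
    obtain ⟨c, hc, hmin⟩ := WellFounded.has_min (wellFounded_lt (α := C)) {c : C | x ∈ G c}
      (hcov x hx)
    exact ⟨c, hc, fun c' hc' => not_lt.mp (hmin c' hc')⟩
  choose lst hl1 hl2 using hleast
  have hmem : ∀ (c : C) {x}, x ∈ G c → x ∈ Win M rf tr T base := fun c x hx =>
    ⟨G c, E c, hC c, hx⟩
  refine ⟨fun x y => ∃ hx : x ∈ Win M rf tr T base, E (lst ⟨x, hx⟩) x y,
    ⟨subset_win M rf tr T base, ?_, ?_, ?_⟩⟩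
  · rintro x y ⟨hx, hxy⟩
    obtain ⟨h1, h2, h3, h4⟩ := (hC (lst ⟨x, hx⟩)).edge x y hxy
    exact ⟨hx, h2, hmem _ h3, h4⟩
  · intro x hx hxT
    obtain ⟨h1, h2⟩ := (hC (lst ⟨x, hx⟩)).ok x (hl1 ⟨x, hx⟩) hxT
    exact ⟨h1.mono fun y hy => ⟨hx, hy⟩, h2⟩
  · intro X a e f hf
    have hW : ∀ n, f n ∈ Win M rf tr T base := fun n => (hf n).1.choose
    have hE : ∀ n, E (lst ⟨f n, hW n⟩) (f n) (f (n + 1)) := fun n => (hf n).1.choose_spec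
    obtain ⟨N, -, hN⟩ := antitone_eventually_const (fun n => lst ⟨f n, hW n⟩) 0 (fun n _ =>
      hl2 ⟨f (n + 1), hW (n + 1)⟩ _ ((hC (lst ⟨f n, hW n⟩)).edge _ _ (hE n)).2.2.1)
    refine ((hC (lst ⟨f N, hW N⟩)).good X a e).tail f N fun n hn => ⟨?_, (hf n).2⟩
    have := hE n
    rwa [show lst ⟨f n, hW n⟩ = lst ⟨f N, hW N⟩ from hN n hn] at this

/-- A new layer `N` of positions, whose moves stay in `N` or lead to known winning positions,
consists of winning positions if paths inside the layer are good. -/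
lemma win_layer {M : Kripke Ag PVar W} {rf tr : Ag → Prop}
    {T : Set (W × AState Ag PVar LVar)} {base : List (Formula Ag PVar LVar)}
    (N : Set (W × AState Ag PVar LVar))
    (EN : W × AState Ag PVar LVar → W × AState Ag PVar LVar → Prop)
    (hok : ∀ x ∈ N, x ∉ Win M rf tr T base → LocalOk M rf tr EN x ∧ base <:+ x.2.2)
    (hedge : ∀ x ∈ N, x ∉ Win M rf tr T base → ∀ y, EN x y →
      QSucc x.2 y.2 ∧ (y ∈ Win M rf tr T base ∨ y ∈ N))
    (hgood : Good fun x y => EN x y ∧ (x ∈ N ∧ x ∉ Win M rf tr T base) ∧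
      y ∈ N ∧ y ∉ Win M rf tr T base) :
    N ⊆ Win M rf tr T base := by
  obtain ⟨E, hE⟩ := exists_max_cert M rf tr T base
  set Wn := Win M rf tr T base with hWn
  intro z hz
  refine ⟨Wn ∪ N, fun x y => E x y ∨ (x ∉ Wn ∧ x ∈ N ∧ EN x y), ⟨?_, ?_, ?_, ?_⟩, Or.inr hz⟩
  · exact (subset_win M rf tr T base).trans Set.subset_union_left
  · rintro x y (h | ⟨h1, h2, h3⟩)
    · obtain ⟨h1, h2, h3, h4⟩ := hE.edge x y h
      exact ⟨Or.inl h1, h2, Or.inl h3, h4⟩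
    · obtain ⟨h4, h5⟩ := hedge x h2 h1 y h3
      exact ⟨Or.inr h2, fun hT => h1 (subset_win M rf tr T base hT), h5, h4⟩
  · intro x hx hxT
    by_cases hxW : x ∈ Wn
    · obtain ⟨h1, h2⟩ := hE.ok x hxW hxT
      exact ⟨h1.mono fun y hy => Or.inl hy, h2⟩
    · have hxN := hx.resolve_left hxW
      obtain ⟨h1, h2⟩ := hok x hxN hxW
      exact ⟨h1.mono fun y hy => Or.inr ⟨hxW, hxN, hy⟩, h2⟩
  · intro X a e f hf
    by_cases hin : ∃ n, f n ∈ Wn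
    · obtain ⟨k, hk⟩ := hin
      have hstep : ∀ n, f n ∈ Wn → E (f n) (f (n + 1)) := fun n hn =>
        (hf n).1.resolve_right fun h => h.1 hn
      have hall : ∀ n ≥ k, f n ∈ Wn := by
        intro n hn
        induction n, hn using Nat.le_induction with
        | base => exact hk
        | succ n hn ih => exact (hE.edge _ _ (hstep n ih)).2.2.1
      exact (hE.good X a e).tail f k fun n hn => ⟨hstep n (hall n hn), (hf n).2⟩
    · push Not at hin
      have hstep : ∀ n, f n ∈ N ∧ EN (f n) (f (n + 1)) := fun n =>
        ((hf n).1.resolve_left fun h => hin n (hE.edge _ _ h).1).2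
      exact hgood X a e f fun n => ⟨⟨(hstep n).2, ⟨(hstep n).1, hin n⟩, (hstep (n + 1)).1,
        hin (n + 1)⟩, (hf n).2⟩

lemma LocalOk.succ {M : Kripke Ag PVar W} {rf tr : Ag → Prop}
    {E : W × AState Ag PVar LVar → W × AState Ag PVar LVar → Prop}
    {x : W × AState Ag PVar LVar} (h : LocalOk M rf tr E x) :
    LocalOk M rf tr (fun x y => QSucc x.2 y.2 ∧ E x y) x := by
  obtain ⟨s, ψ, e⟩ := x
  cases ψ <;> simp only [LocalOk, QSucc] at h ⊢ <;> grind

/-- A position all of whose required moves lead to winning positions is winning. -/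
lemma win_intro {M : Kripke Ag PVar W} {rf tr : Ag → Prop}
    {T : Set (W × AState Ag PVar LVar)} {base : List (Formula Ag PVar LVar)}
    {x : W × AState Ag PVar LVar}
    (h : LocalOk M rf tr (fun _ y => y ∈ Win M rf tr T base) x) (hb : base <:+ x.2.2) :
    x ∈ Win M rf tr T base := by
  refine win_layer {x} (fun x y => QSucc x.2 y.2 ∧ y ∈ Win M rf tr T base) ?_ ?_ ?_ rfl
  · rintro _ rfl -
    exact ⟨h.succ, hb⟩
  · rintro _ - - y hy
    exact ⟨hy.1, Or.inl hy.2⟩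
  · intro X a e f hf
    exact absurd (hf 0).1.1.2 (hf 0).1.2.2.2


/-! ### True formulas have certificates -/

/-- Truth at a point yields a winning position, provided that this holds for the free variables:
an unfolding of `X` to the state assigned to `X` is winning at every point of `ρ X`. -/
lemma win_of_sem {M : Kripke Ag PVar W} {rf tr : Ag → Prop}
    (hrf : ∀ α, rf α → ∀ s, M.R α s s)
    (htr : ∀ α, tr α → ∀ s t u, M.R α s t → M.R α t u → M.R α s u)
    (ψ : Formula Ag PVar LVar) :
    ∀ (e : List (Formula Ag PVar LVar)) (ρ : LVar → Set W) (T : Set (W × AState Ag PVar LVar))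
      (base : List (Formula Ag PVar LVar)), base <:+ e →
      (∀ X ∈ freeVars ψ, ∃ q, look X e = some q ∧ ∀ s ∈ ρ X, ∀ e', look X e' = some q →
        (s, .var X, e') ∈ Win M rf tr T base) →
      ∀ s ∈ sem M ρ ψ, (s, ψ, e) ∈ Win M rf tr T base := by
  induction ψ with
  | prop p =>
    intro e ρ T base hb _ s hs
    exact win_intro hs hb
  | nprop p =>
    intro e ρ T base hb _ s hs
    exact win_intro hs hb
  | tt =>
    intro e ρ T base hb _ s hs
    exact win_intro trivial hb
  | ff =>
    intro e ρ T base hb _ s hs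
    exact hs.elim
  | var X =>
    intro e ρ T base hb hX s hs
    obtain ⟨q, hq, h⟩ := hX X rfl
    exact h s hs e hq
  | and a b iha ihb =>
    intro e ρ T base hb hX s hs
    exact win_intro ⟨iha e ρ T base hb (fun X h => hX X (Or.inl h)) s hs.1,
      ihb e ρ T base hb (fun X h => hX X (Or.inr h)) s hs.2⟩ hb
  | or a b iha ihb =>
    intro e ρ T base hb hX s hs
    refine win_intro ?_ hb
    rcases hs with hs | hs
    · exact Or.inl (iha e ρ T base hb (fun X h => hX X (Or.inl h)) s hs)
    · exact Or.inr (ihb e ρ T base hb (fun X h => hX X (Or.inr h)) s hs)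
  | dia α a ih =>
    intro e ρ T base hb hX s hs
    obtain ⟨t, hst, ht⟩ := hs
    exact win_intro ⟨t, hst, ih e ρ T base hb hX t ht⟩ hb
  | box α a ih =>
    intro e ρ T base hb hX s hs
    have hwin := ih e ρ T base hb hX
    let N : Set (W × AState Ag PVar LVar) := {x | x.1 ∈ sem M ρ (.box α a) ∧ x.2 = (.box α a, e)}
    refine win_layer N (fun x y => QSucc x.2 y.2 ∧ (y ∈ Win M rf tr T base ∨ y ∈ N))
      ?_ (fun _ _ _ _ h => h) ?_ (show (s, .box α a, e) ∈ N from ⟨hs, rfl⟩)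
    · rintro ⟨t, q⟩ ⟨ht, rfl⟩ -
      refine ⟨LocalOk.succ (E := fun _ y => y ∈ Win M rf tr T base ∨ y ∈ N) ⟨?_, ?_, ?_⟩, hb⟩
      · exact fun u hu => Or.inl (hwin u (ht u hu))
      · exact fun hα u hu => Or.inr ⟨fun v hv => ht v (htr α hα t u v hu hv), rfl⟩
      · exact fun hα => Or.inl (hwin t (ht t (hrf α hα t)))
    · intro X b e' f hf hm
      obtain ⟨n, ⟨Y, hY⟩, -⟩ := hm.exists
      have := (hf n).1.2.1.1.2
      rw [Prod.ext_iff] at this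
      rw [this.1] at hY
      cases hY
  | mu X a ih =>
    intro e ρ T base hb hX s hs
    have hbe := hb.trans (List.suffix_cons (.mu X a) e)
    have hbody : bodyOf X (.mu X a : Formula Ag PVar LVar) = some a := by simp [bodyOf]
    suffices h : s ∈ {t | (t, a, (.mu X a :: e : List (Formula Ag PVar LVar))) ∈
        Win M rf tr T base} from win_intro h hb
    refine hs _ ?_
    refine ih _ _ T base hbe fun Y hY => ?_
    by_cases hYX : Y = X
    · subst hYX
      refine ⟨_, look_cons_some e hbody, fun t ht e' he' => win_intro ⟨_, he', ?_⟩ ?_⟩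
      · simpa using ht
      · exact hbe.trans (look_suffix he')
    · have hn : bodyOf Y (.mu X a : Formula Ag PVar LVar) = none := by
        simp [bodyOf, Ne.symm hYX]
      rw [look_cons_none e hn, Function.update_of_ne hYX]
      exact hX Y ⟨hY, hYX⟩
  | nu X a ih =>
    intro e ρ T base hb hX s hs
    have hbe := hb.trans (List.suffix_cons (.nu X a) e)
    have hbody : bodyOf X (.nu X a : Formula Ag PVar LVar) = some a := by simp [bodyOf]
    obtain ⟨S, hS, hsS⟩ := hs
    obtain ⟨b, hbdef⟩ : ∃ b : List (Formula Ag PVar LVar), b = .nu X a :: e := ⟨_, rfl⟩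
    -- positions of `X` at points of the postfixpoint `S`, first taken for granted
    let TX : Set (W × AState Ag PVar LVar) :=
      {x | x.1 ∈ S ∧ x.2.1 = .var X ∧ look X x.2.2 = some (a, b)}
    let T' := Win M rf tr T base ∪ TX
    have hSW : ∀ t ∈ S, (t, a, b) ∈ Win M rf tr T' b := by
      intro t ht
      refine ih b (Function.update ρ X S) T' b List.suffix_rfl (fun Y hY => ?_) t (hS ht)
      by_cases hYX : Y = X
      · subst hYX
        refine ⟨(a, b), hbdef ▸ look_cons_some e hbody, fun u hu e' he' => ?_⟩
        refine subset_win _ _ _ _ _ (Or.inr ⟨?_, rfl, he'⟩)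
        simpa using hu
      · have hn : bodyOf Y (.nu X a : Formula Ag PVar LVar) = none := by
          simp [bodyOf, Ne.symm hYX]
        rw [hbdef, look_cons_none e hn, Function.update_of_ne hYX]
        obtain ⟨q, hq, h⟩ := hX Y ⟨hY, hYX⟩
        exact ⟨q, hq, fun u hu e' he' => subset_win _ _ _ _ _ (Or.inl (h u hu e' he'))⟩
    obtain ⟨E, hE⟩ := exists_max_cert M rf tr T' b
    -- then the assumptions are discharged by unfolding
    let EN : W × AState Ag PVar LVar → W × AState Ag PVar LVar → Prop :=
      fun x y => E x y ∨ (x ∈ TX ∧ y = (x.1, a, b))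
    have hscope : ∀ x ∈ Win M rf tr T' b, x ∉ Win M rf tr T base → b <:+ x.2.2 := by
      intro x hx hx'
      by_cases hT : x ∈ T'
      · exact look_suffix (hT.resolve_left hx').2.2
      · exact (hE.ok x hx hT).2
    have hN : Win M rf tr T' b ⊆ Win M rf tr T base := by
      refine win_layer _ EN ?_ ?_ ?_
      · intro x hx hx'
        refine ⟨?_, (hbdef ▸ hbe : base <:+ b).trans (hscope x hx hx')⟩
        by_cases hT : x ∈ T'
        · have hTX := hT.resolve_left hx'
          obtain ⟨t, q, e'⟩ := x
          obtain ⟨h1, h2, h3⟩ := hTX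
          simp only at h1 h2 h3
          subst h2
          exact ⟨(a, b), h3, Or.inr ⟨⟨h1, rfl, h3⟩, rfl⟩⟩
        · exact (hE.ok x hx hT).1.mono fun y hy => Or.inl hy
      · rintro x hx hx' y (hy | ⟨hTX, rfl⟩)
        · obtain ⟨-, -, h3, h4⟩ := hE.edge x y hy
          exact ⟨h4, Or.inr h3⟩
        · refine ⟨?_, Or.inr (hSW _ hTX.1)⟩
          obtain ⟨t, q, e'⟩ := x
          obtain ⟨h1, h2, h3⟩ := hTX
          simp only at h1 h2 h3
          subst h2
          exact h3
      · intro Y c e' f hf hm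
        obtain ⟨n, -, hn⟩ := hm.exists
        have hbs : b <:+ .mu Y c :: e' := hn ▸ hscope _ (hf n).1.2.2.1 (hf n).1.2.2.2
        refine hE.good Y c e' f (fun k => ⟨(hf k).1.1.resolve_right ?_, (hf k).2⟩) hm
        -- an unfolding of `X` leaves the scope of every `μ` below `b`
        rintro ⟨-, hk⟩
        have h1 := (hf k).2.2
        rw [hk] at h1
        have h2 := hbs.eq_of_length (le_antisymm hbs.length_le h1.length_le)
        rw [hbdef] at h2
        cases h2
    refine win_intro ?_ hb
    show (s, a, .nu X a :: e) ∈ Win M rf tr T base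
    rw [← hbdef]
    exact hN (hSW s hsS)


/-! ### Certificates yield truth -/

/-- The position `x` is a variable bound by one of the binders in `e`. -/
def IsExit (e : List (Formula Ag PVar LVar)) (x : W × AState Ag PVar LVar) : Prop :=
  ∃ X q, x.2.1 = .var X ∧ look X x.2.2 = some q ∧ q.2 <:+ e

/-- `H` is a set of positions below the binders `e` that is closed under the moves `E` except for
exits, and exits from `H` respect the environment `ρ`. -/
structure Region (E : W × AState Ag PVar LVar → W × AState Ag PVar LVar → Prop)
    (e : List (Formula Ag PVar LVar)) (ρ : LVar → Set W)
    (H : Set (W × AState Ag PVar LVar)) : Prop where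
  scope : ∀ x ∈ H, e <:+ x.2.2
  closed : ∀ x ∈ H, ∀ y, E x y → ¬ IsExit e x → y ∈ H
  exits : ∀ x ∈ H, ∀ X q, x.2.1 = .var X → look X x.2.2 = some q → q.2 <:+ e → x.1 ∈ ρ X

/-- Passing from the region of a fixpoint formula `f` to that of its body, keeping only positions
in a set `K` that is closed under moves in the scope of `f`. -/
lemma Region.bind {M : Kripke Ag PVar W} {rf tr : Ag → Prop}
    {G : Set (W × AState Ag PVar LVar)}
    {E : W × AState Ag PVar LVar → W × AState Ag PVar LVar → Prop}
    (hE : Cert M rf tr ∅ [] G E) {e : List (Formula Ag PVar LVar)} {ρ : LVar → Set W}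
    {H : Set (W × AState Ag PVar LVar)} (hHG : H ⊆ G) (hH : Region E e ρ H)
    {f a : Formula Ag PVar LVar} {X : LVar} (hf : bodyOf X f = some a)
    (hf' : ∀ Y, Y ≠ X → bodyOf Y f = none) (K : Set (W × AState Ag PVar LVar)) (S : Set W)
    (hK : ∀ x ∈ K, ∀ y, EdgeIn E (f :: e) x y → y ∈ K)
    (hS : ∀ x ∈ K, ∀ t, EdgeIn E (f :: e) x (t, a, f :: e) → (∃ Y, x.2.1 = .var Y) →
      (t, a, f :: e) ∈ H → t ∈ S) :
    Region E (f :: e) (Function.update ρ X S) {x | x ∈ H ∧ x ∈ K ∧ f :: e <:+ x.2.2} := by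
  have hsuf : e <:+ f :: e := List.suffix_cons f e
  constructor
  · exact fun x hx => hx.2.2
  · rintro x ⟨hxH, hxK, hxs⟩ y hxy hne
    have hys : f :: e <:+ y.2.2 := by
      refine ((hE.edge x y hxy).2.2.2.suffix hxs).resolve_right ?_
      rintro ⟨Y, h1, h2, h3⟩
      exact hne ⟨Y, _, h1, h2, h3⟩
    refine ⟨hH.closed x hxH y hxy ?_, hK x hxK y ⟨hxy, hxs, hys⟩, hys⟩
    rintro ⟨Y, q, h1, h2, h3⟩
    exact hne ⟨Y, q, h1, h2, h3.trans hsuf⟩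
  · rintro ⟨t, ψ, e'⟩ ⟨hxH, hxK, hxs⟩ Y q hY hq hqs
    simp only at hY hq hxs
    subst hY
    have hq' := look_restrict hq hxs hqs
    by_cases hYX : Y = X
    · subst hYX
      rw [look_cons_some e hf] at hq'
      cases hq'
      obtain ⟨q', h1, h2⟩ := (hE.ok _ (hHG hxH) (Set.notMem_empty _)).1
      simp only at h1 h2
      rw [hq] at h1
      cases h1
      rw [Function.update_self]
      refine hS _ hxK t ⟨h2, hxs, List.suffix_rfl⟩ ⟨Y, rfl⟩ (hH.closed _ hxH _ h2 ?_)
      rintro ⟨Z, q, h3, h4, h5⟩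
      cases h3
      simp only at h4
      rw [hq] at h4
      cases h4
      have := h5.length_le
      simp at this
    · rw [look_cons_none e (hf' Y hYX)] at hq'
      rw [Function.update_of_ne hYX]
      exact hH.exits _ hxH Y q rfl hq (look_suffix hq')

/-- In a model whose relations arise from those of `M` by transitive closure (for agents in `tr`)
and by adding loops (for agents in `rf`), the formulas of a certificate over `M` are true. -/
lemma sem_of_cert {M M' : Kripke Ag PVar W} {rf tr : Ag → Prop} (hV : M'.V = M.V)
    (hR : ∀ α s t, M.R α s t → M'.R α s t)
    (hR' : ∀ α s t, M'.R α s t → M.R α s t ∨ (tr α ∧ Relation.TransGen (M.R α) s t) ∨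
      (rf α ∧ s = t))
    {G : Set (W × AState Ag PVar LVar)}
    {E : W × AState Ag PVar LVar → W × AState Ag PVar LVar → Prop}
    (hE : Cert M rf tr ∅ [] G E) (ψ : Formula Ag PVar LVar) :
    ∀ (e : List (Formula Ag PVar LVar)) (ρ : LVar → Set W) (H : Set (W × AState Ag PVar LVar)),
      H ⊆ G → Region E e ρ H → ∀ s, (s, ψ, e) ∈ H → s ∈ sem M' ρ ψ := by
  have hok : ∀ {x}, x ∈ G → LocalOk M rf tr E x := fun hx =>
    (hE.ok _ hx (Set.notMem_empty _)).1
  have hcl : ∀ {e ρ H x y}, Region E e ρ H → x ∈ H → E x y → (∀ X, x.2.1 ≠ .var X) → y ∈ H := by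
    intro e ρ H x y hH hx hxy hX
    refine hH.closed x hx y hxy ?_
    rintro ⟨X, q, h, -⟩
    exact hX X h
  induction ψ with
  | prop p =>
    intro e ρ H hHG hH s hs
    have := hok (hHG hs)
    simpa [sem, hV, LocalOk] using this
  | nprop p =>
    intro e ρ H hHG hH s hs
    have := hok (hHG hs)
    simpa [sem, hV, LocalOk] using this
  | tt => exact fun _ _ _ _ _ _ _ => trivial
  | ff => exact fun e ρ H hHG hH s hs => (hok (hHG hs)).elim
  | var X =>
    intro e ρ H hHG hH s hs
    obtain ⟨q, hq, -⟩ := hok (hHG hs)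
    exact hH.exits _ hs X q rfl hq (look_suffix hq)
  | and a b iha ihb =>
    intro e ρ H hHG hH s hs
    obtain ⟨h1, h2⟩ := hok (hHG hs)
    exact ⟨iha e ρ H hHG hH s (hcl hH hs h1 (by simp)),
      ihb e ρ H hHG hH s (hcl hH hs h2 (by simp))⟩
  | or a b iha ihb =>
    intro e ρ H hHG hH s hs
    rcases hok (hHG hs) with h | h
    · exact Or.inl (iha e ρ H hHG hH s (hcl hH hs h (by simp)))
    · exact Or.inr (ihb e ρ H hHG hH s (hcl hH hs h (by simp)))
  | dia α a ih =>
    intro e ρ H hHG hH s hs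
    obtain ⟨t, h1, h2⟩ := hok (hHG hs)
    exact ⟨t, hR α s t h1, ih e ρ H hHG hH t (hcl hH hs h2 (by simp))⟩
  | box α a ih =>
    intro e ρ H hHG hH s hs t hst
    refine ih e ρ H hHG hH t ?_
    rcases hR' α s t hst with h | ⟨hα, h⟩ | ⟨hα, rfl⟩
    · exact hcl hH hs ((hok (hHG hs)).1 t h) (by simp)
    · clear hst
      induction h using Relation.TransGen.head_induction_on with
      | single h => exact hcl hH hs ((hok (hHG hs)).1 t h) (by simp)
      | head h h' ih' =>
        exact ih' (hcl hH hs ((hok (hHG hs)).2.1 hα _ h) (by simp))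
    · exact hcl hH hs ((hok (hHG hs)).2.2 hα) (by simp)
  | mu X a ih =>
    intro e ρ H hHG hH s hs S hS
    obtain ⟨rk, hrk⟩ := (hE.good X a e).exists_rank
    have hbody : bodyOf X (.mu X a : Formula Ag PVar LVar) = some a := by simp [bodyOf]
    have hbody' : ∀ Y, Y ≠ X → bodyOf Y (.mu X a : Formula Ag PVar LVar) = none := by
      intro Y hY
      simp [bodyOf, hY.symm]
    have key : ∀ (o : Ordinal.{0}) (t : W), (t, a, .mu X a :: e) ∈ H →
        rk (t, a, .mu X a :: e) = o → t ∈ S := by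
      intro o
      induction o using WellFoundedLT.induction with
      | _ o iho =>
        intro t ht hto
        refine hS (ih _ _ _ (fun x hx => hHG hx.1) (Region.bind hE hHG hH hbody hbody'
          {x | rk x ≤ o} S ?_ ?_) t ⟨ht, hto.le, List.suffix_rfl⟩)
        · exact fun x hx y hxy => ((hrk x y hxy).1).trans hx
        · exact fun x hx u hxu hY hu =>
            iho _ (((hrk _ _ hxu).2 ⟨hY, rfl⟩).trans_le hx) u hu rfl
    exact key _ s (hcl hH hs (hok (hHG hs)) (by simp)) rfl
  | nu X a ih =>
    intro e ρ H hHG hH s hs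
    have hbody : bodyOf X (.nu X a : Formula Ag PVar LVar) = some a := by simp [bodyOf]
    have hbody' : ∀ Y, Y ≠ X → bodyOf Y (.nu X a : Formula Ag PVar LVar) = none := by
      intro Y hY
      simp [bodyOf, hY.symm]
    refine ⟨{t | (t, a, (.nu X a :: e : List (Formula Ag PVar LVar))) ∈ H}, fun t ht => ?_,
      hcl hH hs (hok (hHG hs)) (by simp)⟩
    exact ih _ _ _ (fun x hx => hHG hx.1) (Region.bind hE hHG hH hbody hbody' Set.univ _
      (fun _ _ _ _ => trivial) (fun _ _ u _ _ hu => hu)) t ⟨ht, trivial, List.suffix_rfl⟩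

/-! ### The reachable states of the automaton -/

/-- The states for the subformula occurrences of `ψ`, below the binders `e`. -/
def states [DecidableEq Ag] [DecidableEq PVar] : Formula Ag PVar LVar →
    List (Formula Ag PVar LVar) → Finset (AState Ag PVar LVar)
  | .and a b, e => insert (.and a b, e) (states a e ∪ states b e)
  | .or a b, e => insert (.or a b, e) (states a e ∪ states b e)
  | .dia α a, e => insert (.dia α a, e) (states a e)
  | .box α a, e => insert (.box α a, e) (states a e)
  | .mu X a, e => insert (.mu X a, e) (states a (.mu X a :: e))
  | .nu X a, e => insert (.nu X a, e) (states a (.nu X a :: e))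
  | .prop p, e => {(.prop p, e)}
  | .nprop p, e => {(.nprop p, e)}
  | .tt, e => {(.tt, e)}
  | .ff, e => {(.ff, e)}
  | .var X, e => {(.var X, e)}

variable [DecidableEq Ag] [DecidableEq PVar]

lemma mem_states (ψ : Formula Ag PVar LVar) (e : List (Formula Ag PVar LVar)) :
    (ψ, e) ∈ states ψ e := by
  cases ψ <;> simp [states]

lemma states_closed (ψ : Formula Ag PVar LVar) : ∀ (e : List (Formula Ag PVar LVar)) (q q'),
    q ∈ states ψ e → QSucc q q' → q' ∈ states ψ e ∨ ∃ X, look X e = some q' := by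
  induction ψ with
  | prop p => intro e q q' hq h; simp only [states, Finset.mem_singleton] at hq; subst hq; exact h.elim
  | nprop p => intro e q q' hq h; simp only [states, Finset.mem_singleton] at hq; subst hq; exact h.elim
  | tt => intro e q q' hq h; simp only [states, Finset.mem_singleton] at hq; subst hq; exact h.elim
  | ff => intro e q q' hq h; simp only [states, Finset.mem_singleton] at hq; subst hq; exact h.elim
  | var X =>
    intro e q q' hq h
    simp only [states, Finset.mem_singleton] at hq
    subst hq
    exact Or.inr ⟨X, h⟩
  | and a b iha ihb =>
    intro e q q' hq h
    simp only [states, Finset.mem_insert, Finset.mem_union] at hq ⊢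
    rcases hq with rfl | hq | hq
    · rcases h with rfl | rfl <;> simp [mem_states]
    · rcases iha e q q' hq h with h | h <;> simp [h]
    · rcases ihb e q q' hq h with h | h <;> simp [h]
  | or a b iha ihb =>
    intro e q q' hq h
    simp only [states, Finset.mem_insert, Finset.mem_union] at hq ⊢
    rcases hq with rfl | hq | hq
    · rcases h with rfl | rfl <;> simp [mem_states]
    · rcases iha e q q' hq h with h | h <;> simp [h]
    · rcases ihb e q q' hq h with h | h <;> simp [h]
  | dia α a ih =>
    intro e q q' hq h
    simp only [states, Finset.mem_insert] at hq ⊢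
    rcases hq with rfl | hq
    · cases h
      simp [mem_states]
    · rcases ih e q q' hq h with h | h <;> simp [h]
  | box α a ih =>
    intro e q q' hq h
    simp only [states, Finset.mem_insert] at hq ⊢
    rcases hq with rfl | hq
    · rcases h with rfl | rfl <;> simp [mem_states]
    · rcases ih e q q' hq h with h | h <;> simp [h]
  | mu X a ih =>
    intro e q q' hq h
    simp only [states, Finset.mem_insert] at hq ⊢
    rcases hq with rfl | hq
    · cases h
      simp [mem_states]
    · rcases ih _ q q' hq h with h | ⟨Y, hY⟩
      · simp [h]
      · by_cases hYX : Y = X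
        · subst hYX
          rw [look_cons_some (a := a) e (by simp [bodyOf])] at hY
          cases hY
          simp [mem_states]
        · rw [look_cons_none e (by simp [bodyOf, Ne.symm hYX])] at hY
          exact Or.inr ⟨Y, hY⟩
  | nu X a ih =>
    intro e q q' hq h
    simp only [states, Finset.mem_insert] at hq ⊢
    rcases hq with rfl | hq
    · cases h
      simp [mem_states]
    · rcases ih _ q q' hq h with h | ⟨Y, hY⟩
      · simp [h]
      · by_cases hYX : Y = X
        · subst hYX
          rw [look_cons_some (a := a) e (by simp [bodyOf])] at hY
          cases hY
          simp [mem_states]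
        · rw [look_cons_none e (by simp [bodyOf, Ne.symm hYX])] at hY
          exact Or.inr ⟨Y, hY⟩

lemma sizeOf_le_of_mem_sub (φ ψ : Formula Ag PVar LVar) (h : ψ ∈ sub φ) :
    sizeOf ψ ≤ sizeOf φ := by
  induction φ <;> simp only [sub, Finset.mem_insert, Finset.mem_union, Finset.mem_singleton] at h <;>
    grind [Formula.and.sizeOf_spec, Formula.or.sizeOf_spec, Formula.dia.sizeOf_spec,
      Formula.box.sizeOf_spec, Formula.mu.sizeOf_spec, Formula.nu.sizeOf_spec]

lemma card_sub_succ {φ : Formula Ag PVar LVar} {s : Finset (Formula Ag PVar LVar)}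
    (h : ∀ ψ ∈ s, sizeOf ψ < sizeOf φ) : (insert φ s).card = s.card + 1 :=
  Finset.card_insert_of_notMem fun hφ => lt_irrefl _ (h φ hφ)

/-- Occurrences of equal subformulas are different states, so the number of states is only
exponentially bounded by the number of subformulas. -/
lemma card_states (ψ : Formula Ag PVar LVar) : ∀ e : List (Formula Ag PVar LVar),
    (states ψ e).card + 1 ≤ 2 ^ (sub ψ).card := by
  have hbin : ∀ (c : Formula Ag PVar LVar) (a b : Formula Ag PVar LVar)
      (e : List (Formula Ag PVar LVar)), sizeOf a < sizeOf c → sizeOf b < sizeOf c →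
      (states a e).card + 1 ≤ 2 ^ (sub a).card → (states b e).card + 1 ≤ 2 ^ (sub b).card →
      (insert (c, e) (states a e ∪ states b e)).card + 1 ≤ 2 ^ (insert c (sub a ∪ sub b)).card := by
    intro c a b e hac hbc ha hb
    rw [card_sub_succ, pow_succ]
    · have h1 := Finset.card_insert_le (c, e) (states a e ∪ states b e)
      have h2 := Finset.card_union_le (states a e) (states b e)
      have h3 := Nat.pow_le_pow_right (n := 2) (by lia)
        (Finset.card_le_card (Finset.subset_union_left (s₁ := sub a) (s₂ := sub b)))
      have h4 := Nat.pow_le_pow_right (n := 2) (by lia)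
        (Finset.card_le_card (Finset.subset_union_right (s₁ := sub a) (s₂ := sub b)))
      lia
    · intro ψ hψ
      rcases Finset.mem_union.mp hψ with h | h
      · exact (sizeOf_le_of_mem_sub _ _ h).trans_lt hac
      · exact (sizeOf_le_of_mem_sub _ _ h).trans_lt hbc
  have hun : ∀ (c a : Formula Ag PVar LVar) (e e' : List (Formula Ag PVar LVar)),
      sizeOf a < sizeOf c → (states a e').card + 1 ≤ 2 ^ (sub a).card →
      (insert (c, e) (states a e')).card + 1 ≤ 2 ^ (insert c (sub a)).card := by
    intro c a e e' hac ha
    rw [card_sub_succ fun ψ h => (sizeOf_le_of_mem_sub _ _ h).trans_lt hac, pow_succ]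
    have h1 := Finset.card_insert_le (c, e) (states a e')
    have h2 := Nat.one_le_two_pow (n := (sub a).card)
    lia
  induction ψ with
  | prop p => simp [states, sub]
  | nprop p => simp [states, sub]
  | tt => simp [states, sub]
  | ff => simp [states, sub]
  | var X => simp [states, sub]
  | and a b iha ihb => exact fun e => hbin _ a b e (by simp; lia) (by simp) (iha e) (ihb e)
  | or a b iha ihb => exact fun e => hbin _ a b e (by simp; lia) (by simp) (iha e) (ihb e)
  | dia α a ih => exact fun e => hun _ a e e (by simp) (ih _)
  | box α a ih => exact fun e => hun _ a e e (by simp) (ih _)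
  | mu X a ih => exact fun e => hun _ a e _ (by simp) (ih _)
  | nu X a ih => exact fun e => hun _ a e _ (by simp) (ih _)


/-! ### The small model -/

/-- Jumps of the maximal certificate are redirected to representatives. This gives a certificate
over a small model, whose relations are not yet closed under the frame conditions. -/
lemma exists_small_cert (M : Kripke Ag PVar W) (rf tr : Ag → Prop) (φ : Formula Ag PVar LVar)
    (s : W) (hs : (s, φ, []) ∈ Win M rf tr ∅ []) :
    ∃ (A : Type) (_ : Fintype A) (M' : Kripke Ag PVar A) (G : Set (A × AState Ag PVar LVar))
      (E : A × AState Ag PVar LVar → A × AState Ag PVar LVar → Prop) (a : A),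
      Fintype.card A ≤ 2 ^ (states φ []).card *
        (((states φ []).card * (states φ []).card) ^ ((states φ []).card * (states φ []).card) *
          2 ^ ((states φ []).card * (states φ []).card *
            ((states φ []).card * (states φ []).card))) ∧
      Cert M' rf tr ∅ [] G E ∧ (a, φ, []) ∈ G ∧
      ∀ α, (∀ s, ∃ t, M.R α s t) → ∀ a, ∃ b, M'.R α a b := by
  classical
  obtain ⟨E, hE⟩ := exists_max_cert M rf tr (∅ : Set (W × AState Ag PVar LVar)) []
  set Wn := Win M rf tr (∅ : Set (W × AState Ag PVar LVar)) [] with hWn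
  let Q := {q : AState Ag PVar LVar // q ∈ states φ []}
  have hrk : ∀ b : List (Formula Ag PVar LVar), ∃ rk : W × AState Ag PVar LVar → Ordinal.{0},
      ∀ X c e, b = .mu X c :: e → ∀ x y, EdgeIn E b x y → rk y ≤ rk x ∧
        (Unfolds b x y → rk y < rk x) := by
    intro b
    by_cases hb : ∃ X c e, b = .mu X c :: e
    · obtain ⟨X, c, e, rfl⟩ := hb
      obtain ⟨rk, h⟩ := (hE.good X c e).exists_rank
      exact ⟨rk, fun _ _ _ _ => h⟩
    · exact ⟨fun _ => 0, fun X c e h => absurd ⟨X, c, e, h⟩ hb⟩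
  choose rk hrk using hrk
  -- an item is a state together with a state whose binder list names the scope to be ranked
  obtain ⟨A, hA, f, nx, hcard, hsurj, hnx, htrace⟩ := compress
    (fun (s : W) (i : Q × Q) => rk i.2.1.2 (s, i.1.1)) (fun s => {q : Q | (s, q.1) ∈ Wn})
  have hlab : ∀ {t u : W}, {q : Q | (t, q.1) ∈ Wn} = {q : Q | (u, q.1) ∈ Wn} →
      ∀ q ∈ states φ [], (u, q) ∈ Wn → (t, q) ∈ Wn := by
    intro t u h q hq hu
    have : (⟨q, hq⟩ : Q) ∈ {q : Q | (u, q.1) ∈ Wn} := hu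
    rw [← h] at this
    exact this
  have hQ : ∀ {q q'}, q ∈ states φ [] → QSucc q q' → q' ∈ states φ [] := by
    intro q q' hq h
    refine (states_closed φ [] q q' hq h).resolve_right ?_
    rintro ⟨X, hX⟩
    simp [look] at hX
  let M' : Kripke Ag PVar A :=
    ⟨fun α a b => ∃ t, M.R α (f a) t ∧ b = nx a t, fun a => M.V (f a)⟩
  let G : Set (A × AState Ag PVar LVar) := {x | x.2 ∈ states φ [] ∧ (f x.1, x.2) ∈ Wn}
  let E' : A × AState Ag PVar LVar → A × AState Ag PVar LVar → Prop := fun x y =>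
    x.2 ∈ states φ [] ∧ ∃ t, ((y.1 = x.1 ∧ t = f x.1) ∨ y.1 = nx x.1 t) ∧
      E (f x.1, x.2) (t, y.2)
  have hedge : ∀ x y, E' x y → x ∈ G ∧ x ∉ (∅ : Set (A × AState Ag PVar LVar)) ∧ y ∈ G ∧
      QSucc x.2 y.2 := by
    rintro ⟨a, q⟩ ⟨b, q'⟩ ⟨hq, t, ht, h⟩
    obtain ⟨h1, -, h3, h4⟩ := hE.edge _ _ h
    refine ⟨⟨hq, h1⟩, Set.notMem_empty _, ⟨hQ hq h4, ?_⟩, h4⟩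
    rcases ht with ⟨h5, h6⟩ | h5
    · simp only at h3 h5 h6
      subst h5 h6
      exact h3
    · simp only at h3 h5
      subst h5
      exact hlab (hnx a t) q' (hQ hq h4) h3
  have hok : ∀ x ∈ G, LocalOk M' rf tr E' x := by
    rintro ⟨a, ψ, e⟩ ⟨hq, hx⟩
    have h := (hE.ok _ hx (Set.notMem_empty _)).1
    have hstay : ∀ q, E (f a, ψ, e) (f a, q) → E' (a, ψ, e) (a, q) := fun q h =>
      ⟨hq, f a, Or.inl ⟨rfl, rfl⟩, h⟩
    have hjump : ∀ t q, E (f a, ψ, e) (t, q) → E' (a, ψ, e) (nx a t, q) := fun t q h =>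
      ⟨hq, t, Or.inr rfl, h⟩
    cases ψ <;> simp only [LocalOk] at h ⊢
    case prop => exact h
    case nprop => exact h
    case var => exact ⟨h.choose, h.choose_spec.1, hstay _ h.choose_spec.2⟩
    case and => exact ⟨hstay _ h.1, hstay _ h.2⟩
    case or => exact h.imp (hstay _) (hstay _)
    case dia =>
      obtain ⟨t, h1, h2⟩ := h
      exact ⟨nx a t, ⟨t, h1, rfl⟩, hjump _ _ h2⟩
    case box =>
      refine ⟨?_, ?_, fun hα => hstay _ (h.2.2 hα)⟩
      · rintro _ ⟨t, ht, rfl⟩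
        exact hjump _ _ (h.1 t ht)
      · rintro hα _ ⟨t, ht, rfl⟩
        exact hjump _ _ (h.2.1 hα t ht)
    case mu => exact hstay _ h
    case nu => exact hstay _ h
  have hgood : Good E' := by
    intro X c e g hg hm
    obtain ⟨n, -, hn⟩ := hm.exists
    have hst : ∀ n, (g n).2 ∈ states φ [] := fun n => (hedge _ _ (hg n).1).1.1
    choose t ht hEt using fun n => (hg n).1.2
    have hin : ∀ n, EdgeIn E (.mu X c :: e) (f (g n).1, (g n).2) (t n, (g (n + 1)).2) := fun n =>
      ⟨hEt n, (hg n).2⟩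
    have hr := fun n => hrk _ X c e rfl _ _ (hin n)
    refine htrace (fun n => (g n).1) t (fun k => (⟨(g k).2, hst k⟩, ⟨(g (n + 1)).2, hst (n + 1)⟩))
      ht (fun k => ?_) (hm.mono fun k hk => ?_)
    · simp only [hn]
      exact (hr k).1
    · simp only [hn]
      exact (hr k).2 hk
  obtain ⟨a, ha⟩ := hsurj s
  refine ⟨A, hA, M', G, E', a, ?_, ⟨Set.empty_subset _, hedge, fun x hx _ =>
    ⟨hok x hx, List.nil_suffix⟩, hgood⟩, ⟨mem_states φ [], hlab ha _ (mem_states φ []) hs⟩, ?_⟩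
  · simpa [Q] using hcard
  · intro α hα a
    obtain ⟨t, ht⟩ := hα (f a)
    exact ⟨nx a t, t, ht, rfl⟩

/-- The small model, with its relations closed under the frame conditions. -/
lemma exists_small_model {L : Ag → Set FrameCond}
    (hL : ∀ α : Ag, L α ⊆ {FrameCond.D, FrameCond.T, FrameCond.four})
    (φ : Formula Ag PVar LVar) (hφ : Closed φ) (hsat : Satisfiable L φ) :
    ∃ (A : Type) (_ : Fintype A) (M : Kripke Ag PVar A) (a : A), modelFor L M ∧
      Fintype.card A ≤ 2 ^ (states φ []).card *
        (((states φ []).card * (states φ []).card) ^ ((states φ []).card * (states φ []).card) *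
          2 ^ ((states φ []).card * (states φ []).card *
            ((states φ []).card * (states φ []).card))) ∧
      ∀ ρ : LVar → Set A, a ∈ sem M ρ φ := by
  obtain ⟨W, M, s, hM, hs⟩ := hsat
  let rf : Ag → Prop := fun α => .T ∈ L α
  let tr : Ag → Prop := fun α => .four ∈ L α
  have hwin : (s, φ, []) ∈ Win M rf tr ∅ [] :=
    win_of_sem (M := M) (fun α hα => hM α .T hα) (fun α hα => hM α .four hα) φ [] (fun _ => ∅) ∅ []
      List.suffix_rfl (fun X hX => by rw [hφ] at hX; exact hX.elim) s (hs _)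
  obtain ⟨A, hA, M₀, G, E, a, hcard, hcert, ha, hser⟩ := exists_small_cert M rf tr φ s hwin
  let M' : Kripke Ag PVar A := ⟨fun α a b => M₀.R α a b ∨
    (tr α ∧ Relation.TransGen (M₀.R α) a b) ∨ (rf α ∧ a = b), M₀.V⟩
  refine ⟨A, hA, M', a, ?_, hcard, fun ρ => ?_⟩
  · intro α c hc
    rcases hL α hc with rfl | rfl | rfl
    · intro a
      obtain ⟨b, hb⟩ := hser α (hM α _ hc) a
      exact ⟨b, Or.inl hb⟩
    · exact fun a => Or.inr (Or.inr ⟨hc, rfl⟩)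
    · have hcl : ∀ {a b}, M'.R α a b → Relation.TransGen (M₀.R α) a b ∨ a = b := by
        rintro a b (h | ⟨-, h⟩ | ⟨-, h⟩)
        · exact Or.inl (.single h)
        · exact Or.inl h
        · exact Or.inr h
      intro a b d hab hbd
      rcases hcl hab with h1 | rfl
      · rcases hcl hbd with h2 | rfl
        · exact Or.inr (Or.inl ⟨hc, h1.trans h2⟩)
        · exact hab
      · exact hbd
  · refine sem_of_cert (M := M₀) (M' := M') rfl (fun _ _ _ h => Or.inl h) (fun _ _ _ h => h) hcert φ [] ρ G
      subset_rfl ⟨fun _ _ => List.nil_suffix, fun x _ y hxy _ => (hcert.edge x y hxy).2.2.1, ?_⟩ a ha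
    -- there is nothing outside the empty list of binders
    intro x _ X q _ hq hqs
    exact absurd (List.suffix_nil.mp hqs) (look_ne_nil hq)

/-- The bound on the size of the small model in terms of the number `n` of subformulas. -/
def sizeBound (n : ℕ) : ℕ :=
  2 ^ 2 ^ n * ((2 ^ n * 2 ^ n) ^ (2 ^ n * 2 ^ n) * 2 ^ (2 ^ n * 2 ^ n * (2 ^ n * 2 ^ n)))

lemma computable_sizeBound : Computable sizeBound := by
  have hpow : Primrec₂ ((· ^ ·) : ℕ → ℕ → ℕ) := Primrec₂.unpaired'.1 Nat.Primrec.pow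
  have hN : Primrec fun n : ℕ => 2 ^ n := hpow.comp (Primrec.const 2) Primrec.id
  have hm : Primrec fun n : ℕ => 2 ^ n * 2 ^ n := Primrec.nat_mul.comp hN hN
  have h1 : Primrec fun n : ℕ => 2 ^ 2 ^ n := hpow.comp (Primrec.const 2) hN
  have h2 : Primrec fun n : ℕ => (2 ^ n * 2 ^ n) ^ (2 ^ n * 2 ^ n) := hpow.comp hm hm
  have h3 : Primrec fun n : ℕ => 2 ^ (2 ^ n * 2 ^ n * (2 ^ n * 2 ^ n)) :=
    hpow.comp (Primrec.const 2) (Primrec.nat_mul.comp hm hm)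
  exact (Primrec.nat_mul.comp h1 (Primrec.nat_mul.comp h2 h3)).to_comp

lemma card_le_sizeBound {k n : ℕ} (h : k ≤ 2 ^ n) :
    2 ^ k * ((k * k) ^ (k * k) * 2 ^ (k * k * (k * k))) ≤ sizeBound n := by
  have hm : k * k ≤ 2 ^ n * 2 ^ n := Nat.mul_le_mul h h
  refine Nat.mul_le_mul (Nat.pow_le_pow_right two_pos h) (Nat.mul_le_mul ?_
    (Nat.pow_le_pow_right two_pos (Nat.mul_le_mul hm hm)))
  exact (Nat.pow_le_pow_left hm _).trans (Nat.pow_le_pow_right (by positivity) hm)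

end Automaton


/-- if `L(α) ⊆ {D,T,4}` for every agent, then there is a computable
`κ : ℕ → ℕ` such that every `L`-satisfiable closed formula `φ` is satisfied at a
state of a model for `L` with at most `κ(|φ|)` states. -/
theorem stmt8 [Fintype Ag] [DecidableEq Ag] [DecidableEq PVar] [DecidableEq LVar]
    (L : Ag → Set FrameCond)
    (hL : ∀ α : Ag, L α ⊆ {FrameCond.D, FrameCond.T, FrameCond.four}) :
    ∃ κ : ℕ → ℕ, Computable κ ∧
      ∀ φ : Formula Ag PVar LVar, Closed φ → Satisfiable L φ →
        ∃ (W : Type) (instW : Fintype W) (M : Kripke Ag PVar W) (s : W),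
          modelFor L M ∧ @Fintype.card W instW ≤ κ (sub φ).card ∧
            ∀ ρ : LVar → Set W, s ∈ sem M ρ φ := by
  refine ⟨sizeBound, computable_sizeBound, fun φ hφ hsat => ?_⟩
  obtain ⟨A, hA, M, a, hM, hcard, ha⟩ := exists_small_model hL φ hφ hsat
  have hst := card_states φ []
  exact ⟨A, hA, M, a, hM, hcard.trans (card_le_sizeBound (by lia)), ha⟩
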